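/- arXiv:2104.06567 — 3 statements merged into one kernel-verified Lean document; each statement's English description precedes it below -/
import Mathlib

section
/- Special case of the discrete Hardy inequality: if (b_n)_{n≥1} is a nonnegative decreasing sequence and a_n = (Σ_{k=n+1}^∞ b_k²)^{1/2}, then for any 0 < r < 2 and 0 < q ≤ ∞, the sequence (a_n / (n+1)^{1/2})_{n≥0} satisfies ‖(a_n/(n+1)^{1/2})‖_{ℓ_{r,q}} ≲ ‖(b_n)‖_{ℓ_{r,q}}, with implied constant depending only on r and q. -/
open MeasureTheory ENNReal

noncomputable section

/-- Lorentz sequence quasinorm `ℓ_{p,q}` of a nonnegative (already decreasing) sequence,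
indexed from `n = 1` (so `x n` stands for `x_{n+1}`). -/
def lorentzNorm (p : ℝ) (q : ℝ≥0∞) (x : ℕ → ℝ≥0∞) : ℝ≥0∞ :=
  if q = ∞ then ⨆ n : ℕ, ENNReal.ofReal (((n : ℝ) + 1) ^ (1 / p)) * x n
  else (∑' n : ℕ,
      (ENNReal.ofReal (((n : ℝ) + 1) ^ (1 / p - 1 / q.toReal)) * x n) ^ q.toReal) ^
    (1 / q.toReal)

/-- The `ℓ_p` quasinorm of a nonnegative sequence. -/
def lpSeqNorm (p : ℝ) (b : ℕ → ℝ) : ℝ≥0∞ :=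
  (∑' n : ℕ, ENNReal.ofReal (b n ^ p)) ^ (1 / p)

lemma hts_weight (n : ℕ) (e : ℝ) :
    ENNReal.ofReal (((n : ℝ) + 1) ^ e) = ((n + 1 : ℕ) : ℝ≥0∞) ^ e := by
  rw [← ENNReal.ofReal_rpow_of_pos (by positivity)]
  congr 1
  rw [← ENNReal.ofReal_natCast]
  push_cast
  rfl

lemma hts_geom (e : ℝ) (he : e < 0) : ∑' j : ℕ, (2 : ℝ≥0∞) ^ ((j : ℝ) * e) ≠ ∞ := by
  have h : ∀ j : ℕ, (2 : ℝ≥0∞) ^ ((j : ℝ) * e) = ((2 : ℝ≥0∞) ^ e) ^ j := by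
    intro j
    rw [mul_comm, ENNReal.rpow_mul, ENNReal.rpow_natCast]
  simp_rw [h]
  rw [ENNReal.tsum_geometric]
  apply ENNReal.inv_ne_top.2
  apply ne_of_gt
  apply tsub_pos_of_lt
  exact ENNReal.rpow_lt_one_of_one_lt_of_neg (by norm_num) he

/-- dyadic decomposition -/
lemma hts_dyadic (f : ℕ → ℝ≥0∞) (hf : Antitone f) (n : ℕ) :
    ∑' k, f (n + k) ≤ ∑' j : ℕ, ((2 ^ j * (n + 1) : ℕ) : ℝ≥0∞) * f (2 ^ j * (n + 1) - 1) := by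
  have hu : StrictMono (fun j : ℕ => (2 ^ j - 1) * (n + 1) + 1) := by
    intro i j hij
    have h1 : 2 ^ i < 2 ^ j := Nat.pow_lt_pow_right (by norm_num) hij
    have h2 : 1 ≤ 2 ^ i := Nat.one_le_two_pow
    exact Nat.add_lt_add_right (Nat.mul_lt_mul_of_pos_right (by omega) (by omega)) 1
  have h := ENNReal.le_tsum_schlomilch (f := fun k => if k = 0 then 0 else f (n + (k - 1)))
    (fun a b ha hab => by
      simp only [ha.ne', (lt_of_lt_of_le ha hab).ne', if_false]
      exact hf (by omega)) (fun _ => Nat.succ_pos _) hu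
  rw [tsum_eq_zero_add' ENNReal.summable] at h
  simp only [pow_zero, Nat.sub_self, zero_mul, zero_add, Finset.range_one, Finset.sum_singleton,
    if_true, Nat.succ_ne_zero, if_false, Nat.add_sub_cancel] at h
  refine h.trans ?_
  refine ENNReal.tsum_le_tsum fun j => ?_
  obtain ⟨c, hc⟩ : ∃ c, 2 ^ j = c + 1 := ⟨2 ^ j - 1, by
    have : 1 ≤ 2 ^ j := Nat.one_le_two_pow
    omega⟩
  have e1 : n + (2 ^ j - 1) * (n + 1) = 2 ^ j * (n + 1) - 1 := by
    rw [hc, Nat.add_sub_cancel, add_mul, one_mul]; omega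
  rw [Nat.succ_eq_add_one, Nat.succ_eq_add_one, Nat.add_sub_cancel, e1]
  refine mul_le_mul' ?_ le_rfl
  rw [tsub_le_iff_right]
  norm_cast
  rw [pow_succ, hc, ← add_assoc, ← add_mul]
  gcongr
  omega

lemma hts_pointwise (δ : ℝ) (hδ : 0 < δ) : ∃ D : ℝ≥0∞, D ≠ ∞ ∧ ∀ β : ℕ → ℝ≥0∞, Antitone β → ∀ n,
    (∑' k, β (n + k) ^ 2) ^ (1 / 2 : ℝ) / ((n + 1 : ℕ) : ℝ≥0∞) ^ (1 / 2 : ℝ) ≤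
      D * ⨆ j : ℕ, (2 : ℝ≥0∞) ^ ((j : ℝ) * (1 / 2 + δ)) * β (2 ^ j * (n + 1) - 1) := by
  refine ⟨(∑' j : ℕ, (2 : ℝ≥0∞) ^ ((j : ℝ) * (-(2 * δ)))) ^ (1 / 2 : ℝ), ?_, ?_⟩
  · exact ENNReal.rpow_ne_top_of_nonneg (by norm_num) (hts_geom _ (by linarith))
  intro β hβ n
  set G := ∑' j : ℕ, (2 : ℝ≥0∞) ^ ((j : ℝ) * (-(2 * δ)))
  set S := ⨆ j : ℕ, (2 : ℝ≥0∞) ^ ((j : ℝ) * (1 / 2 + δ)) * β (2 ^ j * (n + 1) - 1) with hS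
  have h1 := hts_dyadic (fun k => β k ^ 2) (fun a b hab => by
    have := hβ hab
    dsimp only
    gcongr) n
  have h2 : ∑' k, β (n + k) ^ 2 ≤ G * S ^ 2 * ((n + 1 : ℕ) : ℝ≥0∞) := by
    refine h1.trans ?_
    rw [mul_assoc, ← ENNReal.tsum_mul_right]
    refine ENNReal.tsum_le_tsum fun j => ?_
    have hj : (2 : ℝ≥0∞) ^ ((j : ℝ) * (1 / 2 + δ)) * β (2 ^ j * (n + 1) - 1) ≤ S :=
      le_iSup (fun j : ℕ => (2 : ℝ≥0∞) ^ ((j : ℝ) * (1 / 2 + δ)) * β (2 ^ j * (n + 1) - 1)) j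
    have e : ((2 : ℝ≥0∞) ^ j) = (2 : ℝ≥0∞) ^ ((j : ℝ) * (-(2 * δ))) *
        ((2 : ℝ≥0∞) ^ ((j : ℝ) * (1 / 2 + δ))) ^ 2 := by
      rw [← ENNReal.rpow_natCast _ 2, ← ENNReal.rpow_mul,
        ← ENNReal.rpow_add _ _ (by norm_num) (by norm_num), ← ENNReal.rpow_natCast]
      congr 1
      push_cast
      ring
    calc ((2 ^ j * (n + 1) : ℕ) : ℝ≥0∞) * β (2 ^ j * (n + 1) - 1) ^ 2
        = (2 : ℝ≥0∞) ^ j * β (2 ^ j * (n + 1) - 1) ^ 2 * ((n + 1 : ℕ) : ℝ≥0∞) := by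
          push_cast; ring
      _ = (2 : ℝ≥0∞) ^ ((j : ℝ) * (-(2 * δ))) *
        (((2 : ℝ≥0∞) ^ ((j : ℝ) * (1 / 2 + δ)) * β (2 ^ j * (n + 1) - 1)) ^ 2
          * ((n + 1 : ℕ) : ℝ≥0∞)) := by
          rw [e]; ring
      _ ≤ _ := by gcongr
  apply ENNReal.div_le_of_le_mul
  calc _ ≤ (G * S ^ 2 * ((n + 1 : ℕ) : ℝ≥0∞)) ^ (1 / 2 : ℝ) := by gcongr
    _ = _ := by
      rw [ENNReal.mul_rpow_of_nonneg _ _ (by norm_num), ENNReal.mul_rpow_of_nonneg _ _ (by norm_num),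
        ← ENNReal.rpow_natCast S, ← ENNReal.rpow_mul]
      norm_num

lemma hts_cmp (s : ℝ) : ∃ K : ℝ≥0∞, K ≠ ∞ ∧ ∀ x y : ℕ, 0 < y → y ≤ x → x ≤ 2 * y →
    (x : ℝ≥0∞) ^ s ≤ K * (y : ℝ≥0∞) ^ s := by
  rcases le_total 0 s with hs | hs
  · refine ⟨2 ^ s, ENNReal.rpow_ne_top_of_nonneg hs (by norm_num), fun x y _ _ h => ?_⟩
    rw [← ENNReal.mul_rpow_of_nonneg _ _ hs]
    gcongr
    exact_mod_cast h
  · refine ⟨1, by norm_num, fun x y _ h _ => ?_⟩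
    rw [one_mul]
    obtain ⟨t, rfl⟩ : ∃ t, s = -t := ⟨-s, by ring⟩
    rw [ENNReal.rpow_neg, ENNReal.rpow_neg, ENNReal.inv_le_inv]
    have ht : 0 ≤ t := by linarith
    gcongr

lemma hts_block (s : ℝ) : ∃ K : ℝ≥0∞, K ≠ ∞ ∧ ∀ γ : ℕ → ℝ≥0∞, Antitone γ → ∀ L : ℕ, 0 < L →
    (L : ℝ≥0∞) ^ (s + 1) * ∑' n : ℕ, ((n + 1 : ℕ) : ℝ≥0∞) ^ s * γ (L * (n + 1) - 1) ≤
      K * ∑' n : ℕ, ((n + 1 : ℕ) : ℝ≥0∞) ^ s * γ n := by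
  obtain ⟨K, hK, hcmp⟩ := hts_cmp s
  refine ⟨2 * K, ENNReal.mul_ne_top (by norm_num) hK, fun γ hγ L hL => ?_⟩
  obtain ⟨h, hh1, hh2, hh3⟩ : ∃ h, L ≤ 2 * h ∧ 2 * h ≤ L + 1 ∧ h ≤ L :=
    ⟨(L + 1) / 2, by omega, by omega, by omega⟩
  let φ : ℕ × Fin h → ℕ := fun p => L * p.1 + (L - h + p.2)
  have hφ : Function.Injective φ := by
    rintro ⟨a, t⟩ ⟨b, u⟩ heq
    have ht := t.2
    have hu := u.2
    simp only [φ] at heq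
    have hab : a = b := by
      have := congrArg (· / L) heq
      simp only [Nat.mul_add_div hL] at this
      rwa [Nat.div_eq_of_lt (by omega), Nat.div_eq_of_lt (by omega)] at this
    subst hab
    simp only [Prod.mk.injEq, true_and]
    ext
    omega
  have key : ∀ n : ℕ, (L : ℝ≥0∞) ^ (s + 1) * (((n + 1 : ℕ) : ℝ≥0∞) ^ s * γ (L * (n + 1) - 1)) ≤
      2 * K * ∑' t : Fin h, ((φ (n, t) + 1 : ℕ) : ℝ≥0∞) ^ s * γ (φ (n, t)) := by
    intro n
    have hterm : ∀ t : Fin h, ((L * (n + 1) : ℕ) : ℝ≥0∞) ^ s * γ (L * (n + 1) - 1) ≤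
        K * (((φ (n, t) + 1 : ℕ) : ℝ≥0∞) ^ s * γ (φ (n, t))) := by
      intro t
      have ht := t.2
      have hm : L * (n + 1) = L * n + L := by ring
      have hx : φ (n, t) + 1 ≤ L * (n + 1) := by simp only [φ]; omega
      have hy : L * (n + 1) ≤ 2 * (φ (n, t) + 1) := by simp only [φ]; omega
      rw [← mul_assoc]
      exact mul_le_mul' (hcmp _ _ (by omega) hx hy) (hγ (by omega))
    have hsum : (h : ℝ≥0∞) * (((L * (n + 1) : ℕ) : ℝ≥0∞) ^ s * γ (L * (n + 1) - 1)) ≤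
        K * ∑' t : Fin h, ((φ (n, t) + 1 : ℕ) : ℝ≥0∞) ^ s * γ (φ (n, t)) := by
      rw [← ENNReal.tsum_mul_left]
      refine le_trans (le_of_eq ?_) (ENNReal.tsum_le_tsum hterm)
      simp [tsum_fintype]
    have hLc : (L : ℝ≥0∞) ≤ 2 * (h : ℝ≥0∞) := by exact_mod_cast hh1
    have hL0 : (L : ℝ≥0∞) ≠ 0 := by exact_mod_cast hL.ne'
    rw [ENNReal.rpow_add _ _ hL0 (ENNReal.natCast_ne_top L), ENNReal.rpow_one]
    calc _ = (L : ℝ≥0∞) * (((L * (n + 1) : ℕ) : ℝ≥0∞) ^ s * γ (L * (n + 1) - 1)) := by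
          rw [Nat.cast_mul, ENNReal.mul_rpow_of_ne_top (ENNReal.natCast_ne_top L)
            (ENNReal.natCast_ne_top _)]
          ring
      _ ≤ 2 * (h : ℝ≥0∞) * (((L * (n + 1) : ℕ) : ℝ≥0∞) ^ s * γ (L * (n + 1) - 1)) := by gcongr
      _ ≤ _ := by
          rw [mul_assoc, mul_assoc]
          gcongr
  rw [← ENNReal.tsum_mul_left]
  refine (ENNReal.tsum_le_tsum key).trans ?_
  rw [ENNReal.tsum_mul_left]
  refine mul_le_mul' le_rfl ?_
  rw [← ENNReal.tsum_prod (f := fun n t => ((φ (n, t) + 1 : ℕ) : ℝ≥0∞) ^ s * γ (φ (n, t)))]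
  exact ENNReal.tsum_comp_le_tsum_of_injective hφ
    (fun n => ((n + 1 : ℕ) : ℝ≥0∞) ^ s * γ n)

lemma hts_block_pow (s : ℝ) : ∃ K : ℝ≥0∞, K ≠ ∞ ∧ ∀ γ : ℕ → ℝ≥0∞, Antitone γ → ∀ j : ℕ,
    ∑' n : ℕ, ((n + 1 : ℕ) : ℝ≥0∞) ^ s * γ (2 ^ j * (n + 1) - 1) ≤
      (2 : ℝ≥0∞) ^ ((j : ℝ) * (-(s + 1))) * (K * ∑' n : ℕ, ((n + 1 : ℕ) : ℝ≥0∞) ^ s * γ n) := by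
  obtain ⟨K, hK, h⟩ := hts_block s
  refine ⟨K, hK, fun γ hγ j => ?_⟩
  have h1 := h γ hγ (2 ^ j) (by positivity)
  have e : (2 : ℝ≥0∞) ^ ((j : ℝ) * (-(s + 1))) * ((2 ^ j : ℕ) : ℝ≥0∞) ^ (s + 1) = 1 := by
    rw [Nat.cast_pow, ← ENNReal.rpow_natCast, ← ENNReal.rpow_mul]
    push_cast
    rw [← ENNReal.rpow_add _ _ (by norm_num) (by norm_num)]
    ring_nf
    simp
  calc _ = (2 : ℝ≥0∞) ^ ((j : ℝ) * (-(s + 1))) * (((2 ^ j : ℕ) : ℝ≥0∞) ^ (s + 1) *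
        ∑' n : ℕ, ((n + 1 : ℕ) : ℝ≥0∞) ^ s * γ (2 ^ j * (n + 1) - 1)) := by
        rw [← mul_assoc, e, one_mul]
    _ ≤ _ := by gcongr

lemma hts_top (r : ℝ) (δ : ℝ) (h : 1 / 2 + δ ≤ 1 / r) (β : ℕ → ℝ≥0∞) (n : ℕ) :
    ((n + 1 : ℕ) : ℝ≥0∞) ^ (1 / r) *
      (⨆ j : ℕ, (2 : ℝ≥0∞) ^ ((j : ℝ) * (1 / 2 + δ)) * β (2 ^ j * (n + 1) - 1)) ≤
    ⨆ n : ℕ, ((n + 1 : ℕ) : ℝ≥0∞) ^ (1 / r) * β n := by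
  rw [ENNReal.mul_iSup]
  refine iSup_le fun j => ?_
  refine le_trans ?_ (le_iSup _ (2 ^ j * (n + 1) - 1))
  have h1 : 2 ^ j * (n + 1) - 1 + 1 = 2 ^ j * (n + 1) := Nat.sub_add_cancel (by
    have : 0 < 2 ^ j * (n + 1) := by positivity
    omega)
  rw [h1, ← mul_assoc, Nat.cast_mul, ENNReal.mul_rpow_of_ne_top (ENNReal.natCast_ne_top _)
            (ENNReal.natCast_ne_top _), mul_comm (((2 ^ j : ℕ) : ℝ≥0∞) ^ (1 / r))]
  gcongr
  rw [Nat.cast_pow, ← ENNReal.rpow_natCast, ← ENNReal.rpow_mul]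
  push_cast
  apply ENNReal.rpow_le_rpow_of_exponent_le (by norm_num)
  gcongr

lemma hts_fin (r : ℝ) (δ : ℝ) (h : 1 / 2 + δ < 1 / r) (p : ℝ) (hp : 0 < p) :
    ∃ K : ℝ≥0∞, K ≠ ∞ ∧ ∀ β : ℕ → ℝ≥0∞, Antitone β →
    ∑' n : ℕ, (((n + 1 : ℕ) : ℝ≥0∞) ^ (1 / r - 1 / p) *
      (⨆ j : ℕ, (2 : ℝ≥0∞) ^ ((j : ℝ) * (1 / 2 + δ)) * β (2 ^ j * (n + 1) - 1))) ^ p ≤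
    K * ∑' n : ℕ, (((n + 1 : ℕ) : ℝ≥0∞) ^ (1 / r - 1 / p) * β n) ^ p := by
  obtain ⟨K, hK, hb⟩ := hts_block_pow ((1 / r - 1 / p) * p)
  have hs : (1 / r - 1 / p) * p + 1 = p * (1 / r) := by
    field_simp
    ring
  refine ⟨(∑' j : ℕ, (2 : ℝ≥0∞) ^ ((j : ℝ) * (p * (1 / 2 + δ - 1 / r)))) * K,
    ENNReal.mul_ne_top (hts_geom _ (mul_neg_of_pos_of_neg hp (by linarith))) hK, fun β hβ => ?_⟩
  set s := (1 / r - 1 / p) * p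
  have hsup : ∀ x : ℕ → ℝ≥0∞, (⨆ j, x j) ^ p ≤ ∑' j, x j ^ p := by
    intro x
    rw [← ENNReal.le_rpow_inv_iff hp]
    refine iSup_le fun j => ?_
    rw [ENNReal.le_rpow_inv_iff hp]
    exact ENNReal.le_tsum j
  have hγ : Antitone (fun n => β n ^ p) := fun a b hab => by
    have := hβ hab
    dsimp only
    gcongr
  simp_rw [ENNReal.mul_rpow_of_nonneg _ _ hp.le, ← ENNReal.rpow_mul]
  calc _ ≤ ∑' n : ℕ, ∑' j : ℕ, ((n + 1 : ℕ) : ℝ≥0∞) ^ s *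
        ((2 : ℝ≥0∞) ^ ((j : ℝ) * (1 / 2 + δ)) * β (2 ^ j * (n + 1) - 1)) ^ p := by
        refine ENNReal.tsum_le_tsum fun n => ?_
        rw [ENNReal.tsum_mul_left]
        gcongr
        exact hsup _
    _ = ∑' j : ℕ, (2 : ℝ≥0∞) ^ ((j : ℝ) * (p * (1 / 2 + δ))) *
        ∑' n : ℕ, ((n + 1 : ℕ) : ℝ≥0∞) ^ s * β (2 ^ j * (n + 1) - 1) ^ p := by
        rw [ENNReal.tsum_comm]
        refine tsum_congr fun j => ?_
        rw [← ENNReal.tsum_mul_left]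
        refine tsum_congr fun n => ?_
        rw [ENNReal.mul_rpow_of_nonneg _ _ hp.le, ← ENNReal.rpow_mul]
        rw [show (j : ℝ) * (1 / 2 + δ) * p = (j : ℝ) * (p * (1 / 2 + δ)) by ring]
        ring
    _ ≤ ∑' j : ℕ, (2 : ℝ≥0∞) ^ ((j : ℝ) * (p * (1 / 2 + δ))) *
        ((2 : ℝ≥0∞) ^ ((j : ℝ) * (-(s + 1))) *
          (K * ∑' n : ℕ, ((n + 1 : ℕ) : ℝ≥0∞) ^ s * β n ^ p)) := by
        refine ENNReal.tsum_le_tsum fun j => ?_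
        gcongr
        exact hb _ hγ j
    _ = _ := by
        rw [mul_assoc, ← ENNReal.tsum_mul_right]
        refine tsum_congr fun j => ?_
        rw [← mul_assoc, ← ENNReal.rpow_add _ _ (by norm_num) (by norm_num), hs]
        congr 2
        ring

/-- Special case of the discrete Hardy inequality: for a nonnegative decreasing `(b_n)_{n≥1}`
(here `b n` stands for `b_{n+1}`) and `a_n = (Σ_{k=n+1}^∞ b_k²)^{1/2}`, the sequence
`(a_n/(n+1)^{1/2})_{n≥0}` satisfies `‖(a_n/(n+1)^{1/2})‖_{ℓ_{r,q}} ≲ ‖(b_n)‖_{ℓ_{r,q}}`. -/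
theorem hardy_tail_special (r : ℝ) (hr0 : 0 < r) (hr2 : r < 2) (q : ℝ≥0∞) (hq : 0 < q) :
    ∃ C : ℝ, 0 < C ∧ ∀ b : ℕ → ℝ, (∀ n, 0 ≤ b n) → Antitone b →
      lorentzNorm r q (fun n =>
          (∑' k : ℕ, ENNReal.ofReal (b (n + k) ^ 2)) ^ (1 / 2 : ℝ) /
            ENNReal.ofReal (((n : ℝ) + 1) ^ (1 / 2 : ℝ))) ≤
        ENNReal.ofReal C * lorentzNorm r q (fun n => ENNReal.ofReal (b n)) := by
  obtain ⟨δ, hδ, hδr⟩ : ∃ δ : ℝ, 0 < δ ∧ 1 / 2 + δ < 1 / r := by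
    have : 1 / 2 < 1 / r := one_div_lt_one_div_of_lt hr0 hr2
    exact ⟨(1 / r - 1 / 2) / 2, by linarith, by linarith⟩
  obtain ⟨D, hD, hpt⟩ := hts_pointwise δ hδ
  suffices H : ∃ K : ℝ≥0∞, K ≠ ∞ ∧ ∀ β : ℕ → ℝ≥0∞, Antitone β →
      lorentzNorm r q (fun n => (∑' k : ℕ, β (n + k) ^ 2) ^ (1 / 2 : ℝ) /
        ((n + 1 : ℕ) : ℝ≥0∞) ^ (1 / 2 : ℝ)) ≤ K * lorentzNorm r q β by
    obtain ⟨K, hK, hH⟩ := H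
    refine ⟨K.toReal + 1, by positivity, fun b hb0 hb => ?_⟩
    have h1 := hH (fun n => ENNReal.ofReal (b n)) (fun i j hij => ENNReal.ofReal_le_ofReal (hb hij))
    simp_rw [hts_weight, ENNReal.ofReal_pow (hb0 _)]
    refine h1.trans ?_
    gcongr
    rw [← ENNReal.ofReal_toReal hK]
    apply ENNReal.ofReal_le_ofReal
    rw [ENNReal.toReal_ofReal (by positivity)]
    linarith
  unfold lorentzNorm
  simp_rw [hts_weight]
  by_cases hq' : q = ∞
  · refine ⟨D, hD, fun β hβ => ?_⟩
    simp only [hq', if_true]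
    refine iSup_le fun n => ?_
    refine (mul_le_mul' le_rfl (hpt β hβ n)).trans ?_
    rw [mul_left_comm]
    exact mul_le_mul' le_rfl (hts_top r δ hδr.le β n)
  · have hp : 0 < q.toReal := ENNReal.toReal_pos hq.ne' hq'
    simp only [hq', if_false]
    set p := q.toReal
    obtain ⟨K, hK, hf⟩ := hts_fin r δ hδr p hp
    refine ⟨D * K ^ (1 / p), ENNReal.mul_ne_top hD
      (ENNReal.rpow_ne_top_of_nonneg (by positivity) hK), fun β hβ => ?_⟩
    have h1 : ∑' n : ℕ, (((n + 1 : ℕ) : ℝ≥0∞) ^ (1 / r - 1 / p) *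
        ((∑' k : ℕ, β (n + k) ^ 2) ^ (1 / 2 : ℝ) / ((n + 1 : ℕ) : ℝ≥0∞) ^ (1 / 2 : ℝ))) ^ p ≤
        D ^ p * (K * ∑' n : ℕ, (((n + 1 : ℕ) : ℝ≥0∞) ^ (1 / r - 1 / p) * β n) ^ p) := by
      refine le_trans ?_ (mul_le_mul_right (hf β hβ) _)
      rw [← ENNReal.tsum_mul_left]
      refine ENNReal.tsum_le_tsum fun n => ?_
      rw [← ENNReal.mul_rpow_of_nonneg _ _ hp.le, ← mul_assoc, mul_comm D, mul_assoc]
      gcongr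
      exact hpt β hβ n
    refine (ENNReal.rpow_le_rpow h1 (by positivity : 0 ≤ 1 / p)).trans (le_of_eq ?_)
    rw [ENNReal.mul_rpow_of_nonneg _ _ (by positivity),
      ENNReal.mul_rpow_of_nonneg _ _ (by positivity), ← ENNReal.rpow_mul,
      mul_one_div_cancel hp.ne', ENNReal.rpow_one, mul_assoc]
end
end

section
/- For any compact operator T on a Hilbert space and indices 0 < p < 2, 0 < q ≤ ∞, the Lorentz ideal quasinorm satisfies ‖T‖_{L_{p,q}} ≈ ‖(e(n,T)/(n+1)^{1/2})_{n≥0}‖_{ℓ_{p,q}}, where e(n,T) is the n-th Hilbert–Schmidt approximation number of T and the equivalence constants depend only on p, q. -/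
open MeasureTheory ENNReal

noncomputable section

/-- `n`-th singular value of `T`: distance in operator norm to operators of rank at most `n`. -/
def singVal {H : Type*} [NormedAddCommGroup H] [InnerProductSpace ℂ H]
    (T : H →L[ℂ] H) (n : ℕ) : ℝ :=
  sInf {c : ℝ | ∃ R : H →L[ℂ] H,
    Module.rank ℂ (LinearMap.range (R : H →ₗ[ℂ] H)) ≤ (n : Cardinal) ∧ c = ‖T - R‖}

/-- Hilbert–Schmidt norm of `T` computed with respect to a Hilbert basis `e`. -/
def hsNorm {ι H : Type*} [NormedAddCommGroup H] [InnerProductSpace ℂ H]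
    (e : HilbertBasis ι ℂ H) (T : H →L[ℂ] H) : ℝ≥0∞ :=
  (∑' i, ENNReal.ofReal (‖T (e i)‖ ^ 2)) ^ (1 / 2 : ℝ)

/-- `n`-th Hilbert–Schmidt approximation number of `T`. -/
def hsApprox {ι H : Type*} [NormedAddCommGroup H] [InnerProductSpace ℂ H]
    (e : HilbertBasis ι ℂ H) (T : H →L[ℂ] H) (n : ℕ) : ℝ≥0∞ :=
  ⨅ R ∈ {R : H →L[ℂ] H |
      Module.rank ℂ (LinearMap.range (R : H →ₗ[ℂ] H)) ≤ (n : Cardinal)},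
    hsNorm e (T - R)

section OperatorPart

set_option linter.unusedSectionVars false

variable {ι H : Type*} [NormedAddCommGroup H] [InnerProductSpace ℂ H] [CompleteSpace H]

lemma parseval_ennreal (e : HilbertBasis ι ℂ H) (x : H) :
    ∑' i, ENNReal.ofReal (‖inner ℂ (e i) x‖ ^ 2) = ENNReal.ofReal (‖x‖ ^ 2) := by
  have h := e.hasSum_inner_mul_inner x x
  have h2 := (Complex.hasSum_re h)
  have h3 : HasSum (fun i => ‖inner ℂ (e i) x‖ ^ 2) (‖x‖ ^ 2) := by
    convert h2 using 1
    · ext i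
      rw [← inner_conj_symm x (e i), Complex.conj_mul']
      norm_cast
    · rw [inner_self_eq_norm_sq_to_K]
      norm_cast
  rw [← h3.tsum_eq, ENNReal.ofReal_tsum_of_nonneg (fun i => by positivity) h3.summable]

lemma hs_sum_adjoint (e : HilbertBasis ι ℂ H) (S : H →L[ℂ] H) :
    ∑' i, ENNReal.ofReal (‖S.adjoint (e i)‖ ^ 2) = ∑' i, ENNReal.ofReal (‖S (e i)‖ ^ 2) := by
  have h1 : ∀ i, ENNReal.ofReal (‖S.adjoint (e i)‖ ^ 2)
      = ∑' j, ENNReal.ofReal (‖inner ℂ (S (e j)) (e i)‖ ^ 2) := by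
    intro i
    rw [← parseval_ennreal e]
    simp_rw [ContinuousLinearMap.adjoint_inner_right]
  have h2 : ∀ i, ENNReal.ofReal (‖S (e i)‖ ^ 2)
      = ∑' j, ENNReal.ofReal (‖inner ℂ (S (e i)) (e j)‖ ^ 2) := by
    intro i
    rw [← parseval_ennreal e]
    simp_rw [norm_inner_symm]
  simp_rw [h1, h2]
  exact ENNReal.tsum_comm

lemma bessel_hs (e : HilbertBasis ι ℂ H) (S : H →L[ℂ] H) {n : ℕ} (f : Fin n → H)
    (hf : Orthonormal ℂ f) :
    ∑ i, ENNReal.ofReal (‖S (f i)‖ ^ 2) ≤ ∑' j, ENNReal.ofReal (‖S (e j)‖ ^ 2) := by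
  rw [← hs_sum_adjoint]
  have h1 : ∀ i, ENNReal.ofReal (‖S (f i)‖ ^ 2)
      = ∑' j, ENNReal.ofReal (‖inner ℂ (f i) (S.adjoint (e j))‖ ^ 2) := by
    intro i
    rw [← parseval_ennreal e]
    simp_rw [ContinuousLinearMap.adjoint_inner_right, norm_inner_symm]
  simp_rw [h1]
  rw [← Summable.tsum_finsetSum (fun _ _ => ENNReal.summable)]
  refine ENNReal.tsum_le_tsum fun j => ?_
  rw [← ENNReal.ofReal_sum_of_nonneg (fun _ _ => by positivity)]
  exact ENNReal.ofReal_le_ofReal (hf.sum_inner_products_le _)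

lemma hs_finite_rank (e : HilbertBasis ι ℂ H) (A : H →L[ℂ] H) (k : ℕ)
    (hA : Module.rank ℂ (LinearMap.range (A : H →ₗ[ℂ] H)) ≤ (k : Cardinal)) :
    ∑' j, ENNReal.ofReal (‖A (e j)‖ ^ 2) ≤ ENNReal.ofReal (k * ‖A‖ ^ 2) := by
  set V := LinearMap.range (A : H →ₗ[ℂ] H) with hV
  have : FiniteDimensional ℂ V := by
    exact Module.rank_lt_aleph0_iff.1 (hA.trans_lt Cardinal.natCast_lt_aleph0)
  have hk : Module.finrank ℂ V ≤ k := by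
    rw [← Module.finrank_eq_rank] at hA
    exact_mod_cast hA
  let g := stdOrthonormalBasis ℂ V
  have h1 : ∀ j, ENNReal.ofReal (‖A (e j)‖ ^ 2)
      = ∑ l, ENNReal.ofReal (‖inner ℂ (e j) (A.adjoint (g l : H))‖ ^ 2) := by
    intro j
    have h2 := g.sum_sq_norm_inner_right ⟨A (e j), ⟨e j, rfl⟩⟩
    rw [← ENNReal.ofReal_sum_of_nonneg (fun _ _ => by positivity)]
    congr 1
    rw [Submodule.coe_norm] at h2
    rw [← h2]
    refine Finset.sum_congr rfl fun l _ => ?_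
    rw [ContinuousLinearMap.adjoint_inner_right, norm_inner_symm]
    rfl
  simp_rw [h1]
  rw [Summable.tsum_finsetSum (fun _ _ => ENNReal.summable)]
  simp_rw [parseval_ennreal e]
  rw [← ENNReal.ofReal_sum_of_nonneg (fun _ _ => by positivity)]
  apply ENNReal.ofReal_le_ofReal
  calc ∑ l, ‖A.adjoint (g l : H)‖ ^ 2 ≤ ∑ l : Fin (Module.finrank ℂ V), ‖A‖ ^ 2 := by
        refine Finset.sum_le_sum fun l _ => ?_
        have h3 := A.adjoint.le_opNorm (g l : H)
        have h4 : ‖(g l : H)‖ = 1 := by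
          rw [← Submodule.coe_norm]; exact g.orthonormal.1 l
        rw [h4, mul_one, LinearIsometryEquiv.norm_map] at h3
        gcongr
    _ = (Module.finrank ℂ V : ℝ) * ‖A‖ ^ 2 := by simp
    _ ≤ k * ‖A‖ ^ 2 := by gcongr

lemma exists_greedy (S : H →L[ℂ] H) (k : ℕ) (c : ℝ) (hc : 0 ≤ c)
    (hS : ∀ R : H →L[ℂ] H, Module.rank ℂ (LinearMap.range (R : H →ₗ[ℂ] H)) ≤ (k : Cardinal) →
      c < ‖S - R‖) :
    ∀ i, i ≤ k + 1 → ∃ f : Fin i → H, Orthonormal ℂ f ∧ ∀ l, c ≤ ‖S (f l)‖ := by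
  intro i
  induction i with
  | zero =>
    intro _
    exact ⟨fun l => l.elim0, ⟨fun l => l.elim0, fun l => l.elim0⟩, fun l => l.elim0⟩
  | succ i ih =>
    intro hi
    obtain ⟨f, hf, hfc⟩ := ih (by omega)
    let V := Submodule.span ℂ (Set.range f)
    have : FiniteDimensional ℂ V := FiniteDimensional.span_of_finite ℂ (Set.finite_range f)
    have hr : Module.rank ℂ (LinearMap.range ((S ∘L V.starProjection : H →L[ℂ] H) : H →ₗ[ℂ] H))
        ≤ (k : Cardinal) := by
      have h1 := LinearMap.rank_comp_le_right (V.starProjection : H →ₗ[ℂ] H) (S : H →ₗ[ℂ] H)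
      refine h1.trans ?_
      unfold LinearMap.rank
      rw [Submodule.range_starProjection]
      refine (rank_span_le _).trans ?_
      have h3 := Cardinal.mk_range_le_lift (f := f)
      rw [Cardinal.mk_fin, Cardinal.lift_natCast] at h3
      rw [← Cardinal.lift_natCast.{0} k, ← Cardinal.lift_le.{0}] 
      refine le_trans (by simpa using h3) (b := (i : Cardinal)) ?_
      simp
      omega
    have h2 := hS _ hr
    obtain ⟨x, hx⟩ : ∃ x, c * ‖x‖ < ‖(S - S ∘L V.starProjection) x‖ := by
      by_contra! h
      exact absurd (ContinuousLinearMap.opNorm_le_bound _ hc h) (not_le.2 h2)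
    set y := x - V.starProjection x with hy
    have hyV : y ∈ Vᗮ := Submodule.sub_starProjection_mem_orthogonal x
    have hSy : c * ‖x‖ < ‖S y‖ := by
      simpa [hy, map_sub] using hx
    have hyx : ‖y‖ ≤ ‖x‖ := by
      have := Submodule.norm_starProjection_apply_le Vᗮ x
      rw [Submodule.starProjection_orthogonal] at this
      simpa [hy] using this
    have hy0 : 0 < ‖y‖ := by
      rw [norm_pos_iff]
      intro h0
      rw [h0, map_zero, norm_zero] at hSy
      have : 0 ≤ c * ‖x‖ := by positivity
      linarith
    have hyf : ∀ l, inner ℂ (f l) y = 0 := fun l =>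
      hyV (f l) (Submodule.subset_span ⟨l, rfl⟩)
    have hyf' : ∀ l, inner ℂ y (f l) = 0 := fun l => by
      rw [← inner_conj_symm, hyf, map_zero]
    refine ⟨Fin.cons (((‖y‖⁻¹ : ℝ) : ℂ) • y) f, ⟨?_, ?_⟩, ?_⟩
    · intro l
      refine Fin.cases ?_ (fun l => ?_) l
      · simp [norm_smul, hy0.ne']
      · simpa using hf.1 l
    · intro l l' hll
      revert hll
      refine Fin.cases ?_ (fun l => ?_) l <;> refine Fin.cases ?_ (fun l' => ?_) l'
      · simp
      · intro _
        simp [inner_smul_left, hyf']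
      · intro _
        simp [inner_smul_right, hyf]
      · intro h
        simpa using hf.2 (by simpa using h)
    · intro l
      refine Fin.cases ?_ (fun l => ?_) l
      · simp only [Fin.cons_zero, map_smul, norm_smul]
        rw [Complex.norm_real, Real.norm_of_nonneg (by positivity), inv_mul_eq_div, le_div_iff₀ hy0]
        nlinarith
      · simpa using hfc l

lemma singVal_bddBelow (T : H →L[ℂ] H) (n : ℕ) :
    BddBelow {c : ℝ | ∃ R : H →L[ℂ] H,
      Module.rank ℂ (LinearMap.range (R : H →ₗ[ℂ] H)) ≤ (n : Cardinal) ∧ c = ‖T - R‖} := by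
  refine ⟨0, ?_⟩
  rintro c ⟨R, -, rfl⟩
  positivity

lemma singVal_le (T R : H →L[ℂ] H) (n : ℕ)
    (hR : Module.rank ℂ (LinearMap.range (R : H →ₗ[ℂ] H)) ≤ (n : Cardinal)) :
    singVal T n ≤ ‖T - R‖ :=
  csInf_le (singVal_bddBelow T n) ⟨R, hR, rfl⟩

lemma rank_zero_le (n : ℕ) :
    Module.rank ℂ (LinearMap.range ((0 : H →L[ℂ] H) : H →ₗ[ℂ] H)) ≤ (n : Cardinal) := by
  have : (((0 : H →L[ℂ] H)) : H →ₗ[ℂ] H) = 0 := rfl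
  rw [this, LinearMap.range_zero, rank_bot]
  exact zero_le

lemma singVal_nonneg (T : H →L[ℂ] H) (n : ℕ) : 0 ≤ singVal T n := by
  apply Real.sInf_nonneg
  rintro c ⟨R, -, rfl⟩
  positivity

lemma exists_approx (T : H →L[ℂ] H) (n : ℕ) {δ : ℝ} (hδ : 0 < δ) : ∃ R : H →L[ℂ] H,
    Module.rank ℂ (LinearMap.range (R : H →ₗ[ℂ] H)) ≤ (n : Cardinal) ∧
      ‖T - R‖ < singVal T n + δ := by
  obtain ⟨c, ⟨R, hR, rfl⟩, h⟩ := Real.lt_sInf_add_pos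
    (s := {c : ℝ | ∃ R : H →L[ℂ] H,
      Module.rank ℂ (LinearMap.range (R : H →ₗ[ℂ] H)) ≤ (n : Cardinal) ∧ c = ‖T - R‖})
    ⟨_, 0, rank_zero_le n, rfl⟩ hδ
  exact ⟨R, hR, h⟩

lemma singVal_antitone (T : H →L[ℂ] H) : Antitone (singVal T) := by
  intro m n hmn
  refine le_of_forall_pos_le_add fun δ hδ => ?_
  obtain ⟨R, hR, h⟩ := exists_approx T m hδ
  exact (singVal_le T R n (hR.trans (by exact_mod_cast hmn))).trans h.le

lemma hsApprox_antitone (e : HilbertBasis ι ℂ H) (T : H →L[ℂ] H) : Antitone (hsApprox e T) := by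
  intro m n hmn
  unfold hsApprox
  refine le_iInf₂ fun R hR => ?_
  have hR' : Module.rank ℂ (LinearMap.range (R : H →ₗ[ℂ] H)) ≤ (n : Cardinal) :=
    le_trans (show Module.rank ℂ (LinearMap.range (R : H →ₗ[ℂ] H)) ≤ (m : Cardinal) from hR)
      (by exact_mod_cast hmn)
  exact iInf₂_le R hR'

lemma rank_add_le' (A B : H →L[ℂ] H) (m n : ℕ)
    (hA : Module.rank ℂ (LinearMap.range (A : H →ₗ[ℂ] H)) ≤ (m : Cardinal))
    (hB : Module.rank ℂ (LinearMap.range (B : H →ₗ[ℂ] H)) ≤ (n : Cardinal)) :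
    Module.rank ℂ (LinearMap.range ((A + B : H →L[ℂ] H) : H →ₗ[ℂ] H)) ≤ ((m + n : ℕ) : Cardinal) := by
  have := LinearMap.rank_add_le (A : H →ₗ[ℂ] H) (B : H →ₗ[ℂ] H)
  refine this.trans ?_
  push_cast
  exact add_le_add hA hB

lemma rank_sub_le' (A B : H →L[ℂ] H) (m n : ℕ)
    (hA : Module.rank ℂ (LinearMap.range (A : H →ₗ[ℂ] H)) ≤ (m : Cardinal))
    (hB : Module.rank ℂ (LinearMap.range (B : H →ₗ[ℂ] H)) ≤ (n : Cardinal)) :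
    Module.rank ℂ (LinearMap.range ((A - B : H →L[ℂ] H) : H →ₗ[ℂ] H)) ≤ ((m + n : ℕ) : Cardinal) := by
  rw [sub_eq_add_neg]
  refine rank_add_le' A (-B) m n hA ?_
  have : ((-B : H →L[ℂ] H) : H →ₗ[ℂ] H) = -(B : H →ₗ[ℂ] H) := rfl
  rw [this, LinearMap.range_neg]
  exact hB

/-- First operator estimate: `(n+1)^{1/2} μ(2n) ≤ e(n)`. -/
lemma singVal_le_hsApprox (e : HilbertBasis ι ℂ H) (T : H →L[ℂ] H) (n : ℕ) :
    ENNReal.ofReal (singVal T (2 * n)) ≤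
      hsApprox e T n / ENNReal.ofReal (((n : ℝ) + 1) ^ (1 / 2 : ℝ)) := by
  have hpos : (0 : ℝ) < ((n : ℝ) + 1) ^ (1 / 2 : ℝ) := by positivity
  rw [ENNReal.le_div_iff_mul_le (Or.inl (by simpa using hpos)) (Or.inl ENNReal.ofReal_ne_top),
    ← ENNReal.ofReal_mul (singVal_nonneg _ _)]
  unfold hsApprox
  refine le_iInf₂ fun R hR => ?_
  apply ENNReal.le_of_forall_pos_le_add
  intro δ hδ _
  by_cases h0 : singVal T (2 * n) * ((n : ℝ) + 1) ^ (1 / 2 : ℝ) ≤ δ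
  · refine le_add_left ?_
    rw [← ENNReal.ofReal_coe_nnreal]
    exact ENNReal.ofReal_le_ofReal h0
  push Not at h0
  set c := singVal T (2 * n) - δ / ((n : ℝ) + 1) ^ (1 / 2 : ℝ) with hc
  have hc0 : 0 ≤ c := by
    rw [hc, sub_nonneg, div_le_iff₀ hpos]; exact h0.le
  have hδ' : (0 : ℝ) < δ := by exact_mod_cast hδ
  have hS : ∀ Q : H →L[ℂ] H, Module.rank ℂ (LinearMap.range (Q : H →ₗ[ℂ] H)) ≤ (n : Cardinal) →
      c < ‖(T - R) - Q‖ := by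
    intro Q hQ
    have h1 := singVal_le T (R + Q) (2 * n) (by
      rw [two_mul]; exact rank_add_le' R Q n n hR hQ)
    have h2 : (0:ℝ) < δ / ((n : ℝ) + 1) ^ (1 / 2 : ℝ) := by positivity
    rw [sub_sub]
    linarith
  obtain ⟨f, hf, hfc⟩ := exists_greedy (T - R) n c hc0 hS (n + 1) le_rfl
  have h3 := bessel_hs e (T - R) f hf
  have h4 : ENNReal.ofReal ((n + 1) * c ^ 2) ≤ ∑' j, ENNReal.ofReal (‖(T - R) (e j)‖ ^ 2) := by
    refine le_trans ?_ h3
    rw [← ENNReal.ofReal_sum_of_nonneg (fun _ _ => by positivity)]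
    apply ENNReal.ofReal_le_ofReal
    calc ((n : ℝ) + 1) * c ^ 2 = ∑ i : Fin (n + 1), c ^ 2 := by simp
      _ ≤ _ := by
        refine Finset.sum_le_sum fun i _ => ?_
        have := hfc i
        gcongr
  have h5 := ENNReal.rpow_le_rpow h4 (by norm_num : (0 : ℝ) ≤ 1 / 2)
  have h6 : ENNReal.ofReal (c * ((n : ℝ) + 1) ^ (1 / 2 : ℝ)) ≤ hsNorm e (T - R) := by
    refine le_trans (le_of_eq ?_) h5
    rw [ENNReal.ofReal_rpow_of_nonneg (by positivity) (by norm_num)]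
    congr 1
    rw [Real.mul_rpow (by positivity) (by positivity), ← Real.sqrt_eq_rpow (c ^ 2), Real.sqrt_sq hc0,
      mul_comm]
  calc ENNReal.ofReal (singVal T (2 * n) * ((n : ℝ) + 1) ^ (1 / 2 : ℝ))
      = ENNReal.ofReal (c * ((n : ℝ) + 1) ^ (1 / 2 : ℝ) + δ) := by
        congr 1
        rw [hc]; field_simp; ring
    _ ≤ _ := by
        rw [ENNReal.ofReal_add (by positivity) hδ'.le, ENNReal.ofReal_coe_nnreal]
        gcongr

/-- Partial Hilbert–Schmidt norm over a finite set of basis vectors. -/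
def partHS (e : ι → H) (s : Finset ι) (A : H →L[ℂ] H) : ℝ := √(∑ i ∈ s, ‖A (e i)‖ ^ 2)

lemma partHS_nonneg (e : ι → H) (s : Finset ι) (A : H →L[ℂ] H) : 0 ≤ partHS e s A :=
  Real.sqrt_nonneg _

lemma partHS_add (e : ι → H) (s : Finset ι) (A B : H →L[ℂ] H) :
    partHS e s (A + B) ≤ partHS e s A + partHS e s B := by
  have key : ∀ A : H →L[ℂ] H, partHS e s A =
      ‖(WithLp.toLp 2 (fun i : s => A (e i)) : PiLp 2 (fun _ : s => H))‖ := by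
    intro A
    rw [PiLp.norm_eq_of_L2, partHS]
    congr 1
    exact (Finset.sum_coe_sort s (fun i => ‖A (e i)‖ ^ 2)).symm
  rw [key, key, key]
  exact norm_add_le (WithLp.toLp 2 (fun i : s => A (e i)) : PiLp 2 (fun _ : s => H))
    (WithLp.toLp 2 (fun i : s => B (e i)))

lemma partHS_le_card (e : HilbertBasis ι ℂ H) (s : Finset ι) (A : H →L[ℂ] H) :
    partHS e s A ≤ √(s.card) * ‖A‖ := by
  rw [partHS]
  apply Real.sqrt_le_iff.2 ⟨by positivity, ?_⟩
  rw [mul_pow, Real.sq_sqrt (by positivity)]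
  calc ∑ i ∈ s, ‖A (e i)‖ ^ 2 ≤ ∑ i ∈ s, ‖A‖ ^ 2 := by
        refine Finset.sum_le_sum fun i _ => ?_
        have h := A.le_opNorm (e i)
        rw [e.orthonormal.1 i, mul_one] at h
        gcongr
    _ = _ := by simp

lemma partHS_le_rank (e : HilbertBasis ι ℂ H) (s : Finset ι) (A : H →L[ℂ] H) (k : ℕ)
    (hA : Module.rank ℂ (LinearMap.range (A : H →ₗ[ℂ] H)) ≤ (k : Cardinal)) :
    partHS e s A ≤ √k * ‖A‖ := by
  rw [partHS]
  apply Real.sqrt_le_iff.2 ⟨by positivity, ?_⟩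
  rw [mul_pow, Real.sq_sqrt (by positivity)]
  have h := (ENNReal.sum_le_tsum s).trans (hs_finite_rank e A k hA)
  rw [← ENNReal.ofReal_sum_of_nonneg (fun _ _ => by positivity)] at h
  exact (ENNReal.ofReal_le_ofReal_iff (by positivity)).1 h

lemma hsNorm_le_of_partHS (e : HilbertBasis ι ℂ H) (A : H →L[ℂ] H) (X : ℝ≥0∞)
    (h : ∀ s, ENNReal.ofReal (partHS e s A) ≤ X) : hsNorm e A ≤ X := by
  have h1 : ∑' i, ENNReal.ofReal (‖A (e i)‖ ^ 2) ≤ X ^ (2 : ℝ) := by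
    rw [ENNReal.tsum_eq_iSup_sum]
    refine iSup_le fun s => ?_
    rw [← ENNReal.ofReal_sum_of_nonneg (fun _ _ => by positivity)]
    have h2 := ENNReal.rpow_le_rpow (h s) (by norm_num : (0 : ℝ) ≤ 2)
    refine le_trans (le_of_eq ?_) h2
    rw [ENNReal.ofReal_rpow_of_nonneg (partHS_nonneg _ _ _) (by norm_num), partHS]
    congr 1
    rw [Real.rpow_two, Real.sq_sqrt (by positivity)]
  unfold hsNorm
  refine (ENNReal.rpow_le_rpow h1 (by norm_num : (0 : ℝ) ≤ 1 / 2)).trans (le_of_eq ?_)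
  rw [← ENNReal.rpow_mul]
  norm_num

lemma hsNorm_telescope (e : HilbertBasis ι ℂ H) (T : H →L[ℂ] H) (R : ℕ → H →L[ℂ] H)
    (k : ℕ → ℕ)
    (hD : ∀ j, Module.rank ℂ (LinearMap.range ((R (j + 1) - R j : H →L[ℂ] H) : H →ₗ[ℂ] H))
      ≤ (k j : Cardinal))
    (hlim : Filter.Tendsto (fun j => ‖T - R j‖) Filter.atTop (nhds 0)) :
    hsNorm e (T - R 0) ≤ ∑' j, ENNReal.ofReal (√(k j) * ‖R (j + 1) - R j‖) := by
  refine hsNorm_le_of_partHS e _ _ fun s => ?_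
  have h1 : ∀ M, partHS e s (T - R 0) ≤ √(s.card) * ‖T - R M‖
      + ∑ j ∈ Finset.range M, √(k j) * ‖R (j + 1) - R j‖ := by
    intro M
    have h2 : partHS e s (T - R 0) ≤ partHS e s (T - R M)
        + ∑ j ∈ Finset.range M, √(k j) * ‖R (j + 1) - R j‖ := by
      induction M with
      | zero => simp
      | succ M ih =>
        rw [Finset.sum_range_succ]
        have h3 := partHS_add e s (T - R (M + 1)) (R (M + 1) - R M)
        rw [sub_add_sub_cancel] at h3
        have h4 := partHS_le_rank e s _ _ (hD M)
        linarith
    have := partHS_le_card e s (T - R M)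
    linarith
  have h2 : ∀ M, ENNReal.ofReal (partHS e s (T - R 0)) ≤
      ENNReal.ofReal (√(s.card) * ‖T - R M‖) +
        ∑' j, ENNReal.ofReal (√(k j) * ‖R (j + 1) - R j‖) := by
    intro M
    refine (ENNReal.ofReal_le_ofReal (h1 M)).trans ?_
    refine ENNReal.ofReal_add_le.trans ?_
    gcongr
    rw [ENNReal.ofReal_sum_of_nonneg (fun _ _ => by positivity)]
    exact ENNReal.sum_le_tsum _
  have h3 : Filter.Tendsto (fun M => ENNReal.ofReal (√(s.card) * ‖T - R M‖) +
        ∑' j, ENNReal.ofReal (√(k j) * ‖R (j + 1) - R j‖)) Filter.atTop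
        (nhds (0 + ∑' j, ENNReal.ofReal (√(k j) * ‖R (j + 1) - R j‖))) := by
    refine Filter.Tendsto.add ?_ tendsto_const_nhds
    have := ENNReal.tendsto_ofReal (hlim.const_mul (√(s.card)))
    simpa using this
  rw [zero_add] at h3
  exact ge_of_tendsto' h3 h2

/-- Second operator estimate. -/
lemma hsApprox_le_tsum (e : HilbertBasis ι ℂ H) (T : H →L[ℂ] H) (m : ℕ) :
    hsApprox e T (2 ^ m - 1) ≤ ENNReal.ofReal (2 * √3) *
      ∑' j : ℕ, ENNReal.ofReal (((2 : ℝ) ^ (m + j)) ^ (1 / 2 : ℝ)) *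
        ENNReal.ofReal (singVal T (2 ^ (m + j) - 1)) := by
  set b : ℕ → ℝ := fun j => singVal T (2 ^ (m + j) - 1) with hb
  have hb0 : ∀ j, 0 ≤ b j := fun j => singVal_nonneg _ _
  have hbanti : ∀ j, b (j + 1) ≤ b j := fun j => by
    apply singVal_antitone
    have : 2 ^ (m + j) ≤ 2 ^ (m + (j + 1)) := Nat.pow_le_pow_right (by norm_num) (by omega)
    omega
  simp_rw [← Real.sqrt_eq_rpow]
  set σ : ℕ → ℝ := fun j => √((2 : ℝ) ^ (m + j)) with hσ
  have hσ1 : ∀ j, 1 ≤ σ j := fun j => by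
    rw [hσ]; simp only [Real.one_le_sqrt]; exact one_le_pow₀ (by norm_num)
  have hσ2 : ∀ j, σ j ≤ σ (j + 1) := fun j => by
    rw [hσ]; simp only
    apply Real.sqrt_le_sqrt
    exact pow_le_pow_right₀ (by norm_num) (by omega)
  change _ ≤ ENNReal.ofReal (2 * √3) * ∑' j : ℕ, ENNReal.ofReal (σ j) * ENNReal.ofReal (b j)
  have h3 : 0 < 2 * √3 := by positivity
  by_cases htop : ∑' j : ℕ, ENNReal.ofReal (σ j) * ENNReal.ofReal (b j) = ∞
  · rw [htop, ENNReal.mul_top]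
    · exact le_top
    · simp
  have hblim : Filter.Tendsto b Filter.atTop (nhds 0) := by
    have h1 := ENNReal.tendsto_atTop_zero_of_tsum_ne_top htop
    have h2 : Filter.Tendsto (fun j => ENNReal.ofReal (b j)) Filter.atTop (nhds 0) := by
      refine tendsto_of_tendsto_of_tendsto_of_le_of_le tendsto_const_nhds h1 (fun _ => zero_le)
        (fun j => ?_)
      simp only
      rw [← ENNReal.ofReal_mul (by linarith [hσ1 j])]
      apply ENNReal.ofReal_le_ofReal
      nlinarith [hσ1 j, hb0 j]
    have h4 := (ENNReal.tendsto_toReal (ENNReal.zero_ne_top)).comp h2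
    simpa [Function.comp_def, hb0] using h4
  apply ENNReal.le_of_forall_pos_le_add
  intro δ hδ _
  have hδ' : (0 : ℝ) < δ := by exact_mod_cast hδ
  set η : ℝ := δ / (4 * √3) with hη
  have hη0 : 0 < η := by positivity
  set ε : ℕ → ℝ := fun j => η * (1 / 2) ^ j / σ j with hε
  have hε0 : ∀ j, 0 < ε j := fun j => by
    have := hσ1 j
    rw [hε]; positivity
  have hεanti : ∀ j, ε (j + 1) ≤ ε j := fun j => by
    have := hσ1 j
    rw [hε]; simp only
    apply div_le_div₀ (by positivity) _ (by positivity) (hσ2 j)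
    apply mul_le_mul_of_nonneg_left _ hη0.le
    exact pow_le_pow_of_le_one (by norm_num) (by norm_num) (by omega)
  have hεlim : Filter.Tendsto ε Filter.atTop (nhds 0) := by
    have h1 : Filter.Tendsto (fun j : ℕ => η * (1 / 2 : ℝ) ^ j) Filter.atTop (nhds (η * 0)) :=
      (_root_.tendsto_pow_atTop_nhds_zero_of_lt_one (by norm_num) (by norm_num)).const_mul η
    rw [mul_zero] at h1
    refine tendsto_of_tendsto_of_tendsto_of_le_of_le tendsto_const_nhds h1 (fun j => (hε0 j).le)
        (fun j => ?_)
    exact div_le_self (by positivity) (hσ1 j)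
  choose R hR hRn using fun j => exists_approx T (2 ^ (m + j) - 1) (hε0 j)
  have hlim : Filter.Tendsto (fun j => ‖T - R j‖) Filter.atTop (nhds 0) := by
    have h1 := hblim.add hεlim
    rw [zero_add] at h1
    exact tendsto_of_tendsto_of_tendsto_of_le_of_le tendsto_const_nhds h1 (fun j => norm_nonneg _)
        (fun j => (hRn j).le)
  have hD : ∀ j, Module.rank ℂ (LinearMap.range ((R (j + 1) - R j : H →L[ℂ] H) : H →ₗ[ℂ] H))
      ≤ ((3 * 2 ^ (m + j) : ℕ) : Cardinal) := fun j => by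
    refine (rank_sub_le' _ _ _ _ (hR (j + 1)) (hR j)).trans ?_
    have : 2 ^ (m + (j + 1)) - 1 + (2 ^ (m + j) - 1) ≤ 3 * 2 ^ (m + j) := by
      have : 2 ^ (m + (j + 1)) = 2 * 2 ^ (m + j) := by ring
      omega
    exact_mod_cast this
  have h5 := hsNorm_telescope e T R _ hD hlim
  have h6 : hsApprox e T (2 ^ m - 1) ≤ hsNorm e (T - R 0) := by
    unfold hsApprox
    exact iInf₂_le (R 0) (hR 0)
  refine (h6.trans h5).trans ?_
  have h7 : ∀ j, ENNReal.ofReal (√((3 * 2 ^ (m + j) : ℕ) : ℝ) * ‖R (j + 1) - R j‖) ≤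
      ENNReal.ofReal (2 * √3) * (ENNReal.ofReal (σ j) * ENNReal.ofReal (b j)) +
        ENNReal.ofReal (δ / 2 * (1 / 2) ^ j) := by
    intro j
    have hs := hσ1 j
    rw [← ENNReal.ofReal_mul (by linarith), ← ENNReal.ofReal_mul (by positivity),
      ← ENNReal.ofReal_add (by have := hb0 j; positivity) (by positivity)]
    apply ENNReal.ofReal_le_ofReal
    have h8 : ‖R (j + 1) - R j‖ ≤ 2 * b j + 2 * ε j := by
      have h9 : R (j + 1) - R j = (T - R j) - (T - R (j + 1)) := by abel
      rw [h9]
      have h10 := norm_sub_le (T - R j) (T - R (j + 1))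
      have h11 : ‖T - R j‖ < b j + ε j := hRn j
      have h12 : ‖T - R (j + 1)‖ < b (j + 1) + ε (j + 1) := hRn (j + 1)
      have := hεanti j
      have := hbanti j
      linarith
    have h13 : √((3 * 2 ^ (m + j) : ℕ) : ℝ) = √3 * σ j := by
      push_cast
      rw [Real.sqrt_mul (by norm_num)]
    rw [h13]
    have h14 : σ j * ε j = η * (1 / 2) ^ j := by
      rw [hε]; simp only; field_simp
    have h15 : δ / 2 * (1 / 2) ^ j = 2 * √3 * (η * (1 / 2) ^ j) := by
      rw [hη]; field_simp; ring
    rw [h15, ← h14]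
    calc √3 * σ j * ‖R (j + 1) - R j‖ ≤ √3 * σ j * (2 * b j + 2 * ε j) := by gcongr
      _ = _ := by ring
  refine (ENNReal.tsum_le_tsum h7).trans ?_
  rw [ENNReal.tsum_add, ENNReal.tsum_mul_left]
  gcongr
  rw [← ENNReal.ofReal_tsum_of_nonneg (fun _ => by positivity)
    ((summable_geometric_two).mul_left _), tsum_mul_left, tsum_geometric_two,
    ← ENNReal.ofReal_coe_nnreal]
  apply ENNReal.ofReal_le_ofReal
  linarith

end OperatorPart

section SequencePart

/-- Power weight. -/
def wt (c : ℝ) (n : ℕ) : ℝ≥0∞ := ENNReal.ofReal (((n : ℝ) + 1) ^ c)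

/-- Dyadic weight. -/
def dw (m : ℕ) (c : ℝ) : ℝ≥0∞ := ENNReal.ofReal (((2 : ℝ) ^ m) ^ c)

/-- Comparison constant. -/
def cc (c : ℝ) : ℝ≥0∞ := ENNReal.ofReal ((2 : ℝ) ^ |c|)

lemma cc_ne_top (c : ℝ) : cc c ≠ ∞ := ENNReal.ofReal_ne_top

lemma rpow_compare {x y : ℝ} (c : ℝ) (hx : 0 < x) (h1 : x ≤ y) (h2 : y ≤ 2 * x) :
    y ^ c ≤ 2 ^ |c| * x ^ c ∧ x ^ c ≤ 2 ^ |c| * y ^ c := by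
  have hy : 0 < y := hx.trans_le h1
  have h2c : (1 : ℝ) ≤ 2 ^ |c| := Real.one_le_rpow (by norm_num) (abs_nonneg c)
  have hxc : 0 < x ^ c := by positivity
  have hyc : 0 < y ^ c := by positivity
  rcases le_total 0 c with hc | hc
  · rw [abs_of_nonneg hc] at *
    have h3 : y ^ c ≤ (2 * x) ^ c := Real.rpow_le_rpow hy.le h2 hc
    have h4 : x ^ c ≤ y ^ c := Real.rpow_le_rpow hx.le h1 hc
    rw [Real.mul_rpow (by norm_num) hx.le] at h3
    exact ⟨h3, h4.trans (le_mul_of_one_le_left hyc.le h2c)⟩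
  · rw [abs_of_nonpos hc] at *
    have h3 : (2 * x) ^ c ≤ y ^ c := Real.rpow_le_rpow_of_nonpos hy h2 hc
    have h4 : y ^ c ≤ x ^ c := Real.rpow_le_rpow_of_nonpos hx h1 hc
    rw [Real.mul_rpow (by norm_num) hx.le] at h3
    refine ⟨h4.trans (le_mul_of_one_le_left hxc.le h2c), ?_⟩
    calc x ^ c = 2 ^ (-c) * (2 ^ c * x ^ c) := by
          rw [← mul_assoc, ← Real.rpow_add (by norm_num)]; simp
      _ ≤ _ := by gcongr

lemma dw_mul (m : ℕ) (c d : ℝ) : dw m c * dw m d = dw m (c + d) := by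
  unfold dw
  rw [← ENNReal.ofReal_mul (by positivity), ← Real.rpow_add (by positivity)]

lemma dw_rpow (m : ℕ) (c r : ℝ) (hr : 0 ≤ r) : (dw m c) ^ r = dw m (c * r) := by
  unfold dw
  rw [ENNReal.ofReal_rpow_of_nonneg (by positivity) hr, ← Real.rpow_mul (by positivity)]

lemma dw_one (m : ℕ) : dw m 1 = 2 ^ m := by
  unfold dw
  rw [Real.rpow_one, ENNReal.ofReal_pow (by norm_num)]
  simp

lemma dw_add (m j : ℕ) (c : ℝ) : dw (m + j) c = dw m c * dw j c := by
  unfold dw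
  rw [← ENNReal.ofReal_mul (by positivity), pow_add, Real.mul_rpow (by positivity) (by positivity)]

lemma dw_pow (j : ℕ) (c : ℝ) : dw j c = (dw 1 c) ^ j := by
  induction j with
  | zero => simp [dw]
  | succ j ih => rw [dw_add, ih, pow_succ]

lemma dw_lt_one {c : ℝ} (hc : c < 0) : dw 1 c < 1 := by
  unfold dw
  rw [ENNReal.ofReal_lt_one, pow_one]
  exact Real.rpow_lt_one_of_one_lt_of_neg (by norm_num) hc

lemma wt_half (c : ℝ) (k : ℕ) : wt c k ≤ cc c * wt c (k / 2) := by
  unfold wt cc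
  rw [← ENNReal.ofReal_mul (by positivity)]
  apply ENNReal.ofReal_le_ofReal
  refine (rpow_compare c (by positivity) ?_ ?_).1
  · have : k / 2 ≤ k := Nat.div_le_self _ _
    have : ((k / 2 : ℕ) : ℝ) ≤ k := by exact_mod_cast this
    linarith
  · have : k + 1 ≤ 2 * (k / 2 + 1) := by omega
    exact_mod_cast this

lemma wt_block (c : ℝ) (m n : ℕ) (h1 : 2 ^ m - 1 ≤ n) (h2 : n < 2 ^ (m + 1) - 1) :
    wt c n ≤ cc c * dw m c ∧ dw m c ≤ cc c * wt c n := by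
  have hp : 0 < 2 ^ m := by positivity
  have h3 : 2 ^ m ≤ n + 1 := by omega
  have h4 : n + 1 ≤ 2 * 2 ^ m := by rw [pow_succ] at h2; omega
  have h3' : (2 : ℝ) ^ m ≤ n + 1 := by exact_mod_cast h3
  have h4' : (n : ℝ) + 1 ≤ 2 * 2 ^ m := by exact_mod_cast h4
  obtain ⟨h5, h6⟩ := rpow_compare c (by positivity) h3' h4'
  unfold wt cc dw
  rw [← ENNReal.ofReal_mul (by positivity), ← ENNReal.ofReal_mul (by positivity)]
  exact ⟨ENNReal.ofReal_le_ofReal h5, ENNReal.ofReal_le_ofReal h6⟩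

lemma exists_block (n : ℕ) : ∃ m, 2 ^ m - 1 ≤ n ∧ n < 2 ^ (m + 1) - 1 := by
  refine ⟨Nat.log 2 (n + 1), ?_, ?_⟩
  · have := Nat.pow_log_le_self 2 (Nat.succ_ne_zero n)
    simp only [Nat.succ_eq_add_one] at this
    omega
  · have := Nat.lt_pow_succ_log_self (by norm_num : 1 < 2) (n + 1)
    simp only [Nat.succ_eq_add_one] at this
    omega

lemma log_block {m n : ℕ} : Nat.log 2 (n + 1) = m ↔ n ∈ Finset.Ico (2 ^ m - 1) (2 ^ (m + 1) - 1) := by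
  rw [Nat.log_eq_iff (Or.inr ⟨by norm_num, by omega⟩), Finset.mem_Ico]
  have hp : 0 < 2 ^ m := by positivity
  have hp : 0 < 2 ^ (m + 1) := by positivity
  omega

lemma tsum_block (f : ℕ → ℝ≥0∞) :
    ∑' n, f n = ∑' m : ℕ, ∑ n ∈ Finset.Ico (2 ^ m - 1) (2 ^ (m + 1) - 1), f n := by
  have h1 : ∀ n, f n = ∑' m, if m = Nat.log 2 (n + 1) then f n else 0 := fun n => by
    rw [tsum_ite_eq]
  calc ∑' n, f n = ∑' n, ∑' m, if m = Nat.log 2 (n + 1) then f n else 0 := tsum_congr h1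
    _ = ∑' m, ∑' n, if m = Nat.log 2 (n + 1) then f n else 0 := ENNReal.tsum_comm
    _ = _ := by
      refine tsum_congr fun m => ?_
      rw [tsum_eq_sum (s := Finset.Ico (2 ^ m - 1) (2 ^ (m + 1) - 1))]
      · refine Finset.sum_congr rfl fun n hn => ?_
        rw [if_pos (log_block.2 hn).symm]
      · intro n hn
        rw [if_neg]
        intro h
        exact hn (log_block.1 h.symm)

lemma card_block (m : ℕ) : (Finset.Ico (2 ^ m - 1) (2 ^ (m + 1) - 1)).card = 2 ^ m := by
  rw [Nat.card_Ico, pow_succ]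
  have hp : 0 < 2 ^ m := by positivity
  omega

lemma tsum_le_block (f a : ℕ → ℝ≥0∞)
    (h : ∀ m n, 2 ^ m - 1 ≤ n → n < 2 ^ (m + 1) - 1 → f n ≤ a m) :
    ∑' n, f n ≤ ∑' m : ℕ, 2 ^ m * a m := by
  rw [tsum_block]
  refine ENNReal.tsum_le_tsum fun m => ?_
  refine (Finset.sum_le_card_nsmul _ _ (a m) fun n hn => ?_).trans (le_of_eq ?_)
  · rw [Finset.mem_Ico] at hn
    exact h m n hn.1 hn.2
  · rw [card_block, nsmul_eq_mul]; push_cast; rfl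

lemma block_le_tsum (f a : ℕ → ℝ≥0∞)
    (h : ∀ m n, 2 ^ m - 1 ≤ n → n < 2 ^ (m + 1) - 1 → a m ≤ f n) :
    ∑' m : ℕ, 2 ^ m * a m ≤ ∑' n, f n := by
  rw [tsum_block f]
  refine ENNReal.tsum_le_tsum fun m => ?_
  refine le_trans (le_of_eq ?_) (Finset.card_nsmul_le_sum _ _ (a m) fun n hn => ?_)
  · rw [card_block, nsmul_eq_mul]; push_cast; rfl
  · rw [Finset.mem_Ico] at hn
    exact h m n hn.1 hn.2

lemma tsum_half (g : ℕ → ℝ≥0∞) : ∑' k, g (k / 2) = 2 * ∑' n, g n := by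
  rw [← tsum_even_add_odd ENNReal.summable ENNReal.summable, two_mul]
  congr 1
  · refine tsum_congr fun n => ?_
    congr 1; omega
  · refine tsum_congr fun n => ?_
    congr 1; omega

/-- Finite form of the Lorentz norm comparison. -/
lemma root_compare {r : ℝ} (hr : 0 < r) {A B K : ℝ≥0∞} (h : A ≤ K * B) :
    A ^ (1 / r) ≤ K ^ (1 / r) * B ^ (1 / r) := by
  rw [← ENNReal.mul_rpow_of_nonneg _ _ (by positivity)]
  exact ENNReal.rpow_le_rpow h (by positivity)

lemma seqA (p : ℝ) (q : ℝ≥0∞) (hq : 0 < q) : ∃ K : ℝ≥0∞, K ≠ ∞ ∧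
    ∀ μ x : ℕ → ℝ≥0∞, Antitone μ → (∀ n, μ (2 * n) ≤ x n) →
      lorentzNorm p q μ ≤ K * lorentzNorm p q x := by
  have hterm : ∀ c : ℝ, ∀ μ x : ℕ → ℝ≥0∞, Antitone μ → (∀ n, μ (2 * n) ≤ x n) →
      ∀ k, wt c k * μ k ≤ cc c * (wt c (k / 2) * x (k / 2)) := by
    intro c μ x hμ hx k
    rw [← mul_assoc]
    refine mul_le_mul' (wt_half c k) ((hμ ?_).trans (hx _))
    omega
  by_cases hq' : q = ∞
  · refine ⟨cc (1 / p), cc_ne_top _, fun μ x hμ hx => ?_⟩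
    simp only [lorentzNorm, if_pos hq']
    refine iSup_le fun k => (hterm (1 / p) μ x hμ hx k).trans ?_
    gcongr
    exact le_iSup (fun n => wt (1 / p) n * x n) (k / 2)
  · set r := q.toReal with hr
    have hr0 : 0 < r := ENNReal.toReal_pos hq.ne' hq'
    set c := 1 / p - 1 / r with hc
    refine ⟨(cc c ^ r * 2) ^ (1 / r), ?_, fun μ x hμ hx => ?_⟩
    · refine ENNReal.rpow_ne_top_of_nonneg (by positivity) ?_
      exact ENNReal.mul_ne_top (ENNReal.rpow_ne_top_of_nonneg hr0.le (cc_ne_top _)) (by simp)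
    · simp only [lorentzNorm, if_neg hq', ← hr, ← hc]
      apply root_compare hr0
      calc ∑' n : ℕ, (wt c n * μ n) ^ r
          ≤ ∑' n : ℕ, cc c ^ r * (wt c (n / 2) * x (n / 2)) ^ r := by
            refine ENNReal.tsum_le_tsum fun k => ?_
            rw [← ENNReal.mul_rpow_of_nonneg _ _ hr0.le]
            exact ENNReal.rpow_le_rpow (hterm c μ x hμ hx k) hr0.le
        _ = cc c ^ r * 2 * ∑' n : ℕ, (wt c n * x n) ^ r := by
            rw [ENNReal.tsum_mul_left, tsum_half (fun n => (wt c n * x n) ^ r), mul_assoc]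

/-- Hardy type inequality with geometric weights, pointwise form. -/
lemma hardy_sup (θ : ℝ≥0∞) (y : ℕ → ℝ≥0∞) (U : ℝ≥0∞) (hU : ∀ j, θ ^ j * y j ≤ U) :
    ∑' j, (θ * θ) ^ j * y j ≤ (1 - θ)⁻¹ * U := by
  rw [← ENNReal.tsum_geometric, ← ENNReal.tsum_mul_right]
  refine ENNReal.tsum_le_tsum fun j => ?_
  rw [mul_pow, mul_assoc]
  gcongr
  exact hU j

lemma hardy_sum (θ : ℝ≥0∞) (r : ℝ) (hr : 0 < r) (y : ℕ → ℝ≥0∞) :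
    ∑' m : ℕ, (∑' j, (θ * θ) ^ j * y (m + j)) ^ r ≤
      ((1 - θ)⁻¹ ^ r * (1 - θ ^ r)⁻¹) * ∑' m, y m ^ r := by
  have h1 : ∀ m, (∑' j, (θ * θ) ^ j * y (m + j)) ^ r ≤
      (1 - θ)⁻¹ ^ r * ∑' j, (θ ^ r) ^ j * y (m + j) ^ r := by
    intro m
    have h2 := hardy_sup θ (fun j => y (m + j)) ((∑' j, (θ ^ j * y (m + j)) ^ r) ^ (1 / r)) (by
      intro j
      rw [one_div, ENNReal.le_rpow_inv_iff hr]
      exact ENNReal.le_tsum (f := fun j => (θ ^ j * y (m + j)) ^ r) j)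
    refine (ENNReal.rpow_le_rpow h2 hr.le).trans (le_of_eq ?_)
    rw [ENNReal.mul_rpow_of_nonneg _ _ hr.le, ← ENNReal.rpow_mul, one_div_mul_cancel hr.ne',
      ENNReal.rpow_one]
    congr 1
    refine tsum_congr fun j => ?_
    rw [ENNReal.mul_rpow_of_nonneg _ _ hr.le]
    congr 1
    rw [← ENNReal.rpow_natCast, ← ENNReal.rpow_natCast, ← ENNReal.rpow_mul, ← ENNReal.rpow_mul,
      mul_comm]
  calc _ ≤ ∑' m, (1 - θ)⁻¹ ^ r * ∑' j, (θ ^ r) ^ j * y (m + j) ^ r := ENNReal.tsum_le_tsum h1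
    _ = (1 - θ)⁻¹ ^ r * ∑' j, (θ ^ r) ^ j * ∑' m, y (m + j) ^ r := by
      rw [ENNReal.tsum_mul_left, ENNReal.tsum_comm]
      simp_rw [ENNReal.tsum_mul_left]
    _ ≤ (1 - θ)⁻¹ ^ r * ∑' j, (θ ^ r) ^ j * ∑' m, y m ^ r := by
      refine mul_le_mul_right (ENNReal.tsum_le_tsum fun j => mul_le_mul_right ?_ _) _
      exact ENNReal.tsum_comp_le_tsum_of_injective (add_left_injective j) (fun m => y m ^ r)
    _ = _ := by
      rw [ENNReal.tsum_mul_right, ENNReal.tsum_geometric, mul_assoc]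

lemma wt_mul_div (c : ℝ) (n : ℕ) (E : ℝ≥0∞) :
    wt c n * (E / wt (1 / 2) n) = wt (c - 1 / 2) n * E := by
  rw [ENNReal.div_eq_inv_mul, ← mul_assoc]
  congr 1
  unfold wt
  rw [← ENNReal.ofReal_inv_of_pos (by positivity), ← ENNReal.ofReal_mul (by positivity),
    ← Real.rpow_neg (by positivity), ← Real.rpow_add (by positivity), sub_eq_add_neg]

lemma seqB (p : ℝ) (hp0 : 0 < p) (hp2 : p < 2) (q : ℝ≥0∞) (hq : 0 < q)
    (K0 : ℝ≥0∞) (hK0 : K0 ≠ ∞) : ∃ K : ℝ≥0∞, K ≠ ∞ ∧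
    ∀ μ E : ℕ → ℝ≥0∞, Antitone μ → Antitone E →
      (∀ m, E (2 ^ m - 1) ≤ K0 * ∑' j, dw (m + j) (1 / 2) * μ (2 ^ (m + j) - 1)) →
      lorentzNorm p q (fun n => E n / wt (1 / 2) n) ≤ K * lorentzNorm p q μ := by
  set s := 1 / p - 1 / 2 with hs
  have hs0 : 0 < s := by
    rw [hs, sub_pos]
    exact one_div_lt_one_div_of_lt hp0 hp2
  set θ := dw 1 (-(s / 2)) with hθ
  have hθ1 : θ < 1 := dw_lt_one (by linarith)
  have hZ : ∀ μ E : ℕ → ℝ≥0∞, 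
      (∀ m, E (2 ^ m - 1) ≤ K0 * ∑' j, dw (m + j) (1 / 2) * μ (2 ^ (m + j) - 1)) →
      ∀ m, dw m s * E (2 ^ m - 1) ≤
        K0 * ∑' j, (θ * θ) ^ j * (dw (m + j) (1 / p) * μ (2 ^ (m + j) - 1)) := by
    intro μ E hE m
    refine (mul_le_mul_right (hE m) _).trans (le_of_eq ?_)
    rw [mul_left_comm, ← ENNReal.tsum_mul_left]
    congr 1
    refine tsum_congr fun j => ?_
    rw [← mul_assoc, ← mul_assoc]
    congr 1
    rw [hθ, dw_mul, ← dw_pow, dw_add, dw_add, ← mul_assoc, dw_mul, mul_left_comm, dw_mul]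
    congr 2 <;> rw [hs] <;> ring
  have hG : (1 - θ)⁻¹ ≠ ∞ := by
    rw [ENNReal.inv_ne_top]
    exact (tsub_pos_of_lt hθ1).ne'
  by_cases hq' : q = ∞
  · refine ⟨cc s * (K0 * ((1 - θ)⁻¹ * cc (1 / p))), ?_, fun μ E hμ hE h => ?_⟩
    · exact ENNReal.mul_ne_top (cc_ne_top _) (ENNReal.mul_ne_top hK0
        (ENNReal.mul_ne_top hG (cc_ne_top _)))
    simp only [lorentzNorm, if_pos hq']
    refine iSup_le fun n => ?_
    change wt (1 / p) n * (E n / wt (1 / 2) n) ≤ _ * ⨆ n, wt (1 / p) n * μ n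
    rw [wt_mul_div]
    obtain ⟨m, h1, h2⟩ := exists_block n
    calc wt (1 / p - 1 / 2) n * E n ≤ (cc s * dw m s) * E (2 ^ m - 1) :=
          mul_le_mul' (wt_block s m n h1 h2).1 (hE h1)
      _ = cc s * (dw m s * E (2 ^ m - 1)) := by rw [mul_assoc]
      _ ≤ cc s * (K0 * ((1 - θ)⁻¹ * (cc (1 / p) * ⨆ n, wt (1 / p) n * μ n))) := by
          refine mul_le_mul_right ((hZ μ E h m).trans (mul_le_mul_right ?_ _)) _
          refine hardy_sup θ (fun j => dw (m + j) (1 / p) * μ (2 ^ (m + j) - 1)) _ fun j => ?_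
          refine (mul_le_of_le_one_left zero_le (pow_le_one₀ zero_le hθ1.le)).trans ?_
          have hp : 0 < 2 ^ (m + j) := by positivity
          have h5 := (wt_block (1 / p) (m + j) (2 ^ (m + j) - 1) le_rfl
            (by rw [pow_succ]; omega)).2
          refine (mul_le_mul_left h5 _).trans ?_
          rw [mul_assoc]
          gcongr
          exact le_iSup (fun n => wt (1 / p) n * μ n) (2 ^ (m + j) - 1)
      _ = _ := by ring
  · set r := q.toReal with hr
    have hr0 : 0 < r := ENNReal.toReal_pos hq.ne' hq'
    set c := 1 / p - 1 / r with hc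
    have hθr : θ ^ r < 1 := ENNReal.rpow_lt_one hθ1 hr0
    have hGr : (1 - θ ^ r)⁻¹ ≠ ∞ := by
      rw [ENNReal.inv_ne_top]
      exact (tsub_pos_of_lt hθr).ne'
    have hrt : ∀ a : ℝ≥0∞, a ≠ ∞ → a ^ r ≠ ∞ := fun a ha =>
      ENNReal.rpow_ne_top_of_nonneg hr0.le ha
    refine ⟨(cc (c - 1 / 2) ^ r * (K0 ^ r * (((1 - θ)⁻¹ ^ r * (1 - θ ^ r)⁻¹) *
      (1 + dw 1 (1 / p) ^ r * cc c ^ r)))) ^ (1 / r), ?_, fun μ E hμ hE h => ?_⟩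
    · refine ENNReal.rpow_ne_top_of_nonneg (by positivity) ?_
      refine ENNReal.mul_ne_top (hrt _ (cc_ne_top _)) (ENNReal.mul_ne_top (hrt _ hK0)
        (ENNReal.mul_ne_top (ENNReal.mul_ne_top (hrt _ hG) hGr) (ENNReal.add_ne_top.2 ⟨by simp,
        ENNReal.mul_ne_top (hrt _ ENNReal.ofReal_ne_top) (hrt _ (cc_ne_top _))⟩)))
    simp only [lorentzNorm, if_neg hq', ← hr, ← hc]
    apply root_compare hr0
    change ∑' n, (wt c n * (E n / wt (1 / 2) n)) ^ r ≤ _ * ∑' n, (wt c n * μ n) ^ r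
    simp_rw [wt_mul_div]
    set Y := ∑' n, (wt c n * μ n) ^ r with hY
    -- the dyadic lower bound
    have hlow : ∑' m, (dw m (1 / p) * μ (2 ^ m - 1)) ^ r ≤ (1 + dw 1 (1 / p) ^ r * cc c ^ r) * Y := by
      rw [tsum_eq_zero_add' ENNReal.summable, add_mul]
      refine add_le_add ?_ ?_
      · rw [one_mul]
        refine le_trans (le_of_eq ?_) (ENNReal.le_tsum 0)
        simp [dw, wt]
      · have h1 := block_le_tsum (fun n => cc c ^ r * (wt c n * μ n) ^ r)
          (fun m => (dw m c * μ (2 ^ (m + 1) - 1)) ^ r) (by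
            intro m n h1 h2
            rw [← ENNReal.mul_rpow_of_nonneg _ _ hr0.le, ← mul_assoc]
            refine ENNReal.rpow_le_rpow ?_ hr0.le
            exact mul_le_mul' (wt_block c m n h1 h2).2 (hμ h2.le))
        rw [ENNReal.tsum_mul_left] at h1
        refine le_trans (le_of_eq ?_) ((mul_le_mul_right h1 (dw 1 (1 / p) ^ r)).trans
          (le_of_eq (mul_assoc _ _ _).symm))
        rw [← ENNReal.tsum_mul_left]
        refine tsum_congr fun m => ?_
        rw [ENNReal.mul_rpow_of_nonneg _ _ hr0.le, ENNReal.mul_rpow_of_nonneg _ _ hr0.le, dw_add,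
          ENNReal.mul_rpow_of_nonneg _ _ hr0.le, ← dw_one, ← mul_assoc, ← mul_assoc]
        congr 1
        rw [mul_comm, mul_assoc]
        congr 1
        rw [dw_rpow _ _ _ hr0.le, dw_rpow _ _ _ hr0.le, dw_mul]
        congr 1
        rw [hc]; field_simp; ring
    -- the dyadic upper bound
    have hup : ∑' n, (wt (c - 1 / 2) n * E n) ^ r ≤
        cc (c - 1 / 2) ^ r * ∑' m, (dw m s * E (2 ^ m - 1)) ^ r := by
      have h1 := tsum_le_block (fun n => (wt (c - 1 / 2) n * E n) ^ r)
          (fun m => (cc (c - 1 / 2) * dw m (c - 1 / 2) * E (2 ^ m - 1)) ^ r) (by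
            intro m n h1 h2
            refine ENNReal.rpow_le_rpow ?_ hr0.le
            exact mul_le_mul' (wt_block _ m n h1 h2).1 (hE h1))
      refine h1.trans (le_of_eq ?_)
      rw [← ENNReal.tsum_mul_left]
      refine tsum_congr fun m => ?_
      have hX : (2 : ℝ≥0∞) ^ m * dw m (c - 1 / 2) ^ r = dw m s ^ r := by
        rw [← dw_one, dw_rpow _ _ _ hr0.le, dw_rpow _ _ _ hr0.le, dw_mul]
        congr 1
        rw [hc, hs]; field_simp; ring
      simp only [ENNReal.mul_rpow_of_nonneg _ _ hr0.le]
      rw [← hX]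
      ring
    have hmid : ∑' m, (dw m s * E (2 ^ m - 1)) ^ r ≤ K0 ^ r *
        (((1 - θ)⁻¹ ^ r * (1 - θ ^ r)⁻¹) * ∑' m, (dw m (1 / p) * μ (2 ^ m - 1)) ^ r) := by
      refine le_trans ?_ (mul_le_mul_right (hardy_sum θ r hr0
        (fun m => dw m (1 / p) * μ (2 ^ m - 1))) _)
      rw [← ENNReal.tsum_mul_left]
      refine ENNReal.tsum_le_tsum fun m => ?_
      rw [← ENNReal.mul_rpow_of_nonneg _ _ hr0.le]
      exact ENNReal.rpow_le_rpow (hZ μ E h m) hr0.le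
    refine hup.trans ?_
    simp only [mul_assoc] at hmid ⊢
    gcongr
    refine hmid.trans ?_
    gcongr

end SequencePart

/-- For compact `T`, `0 < p < 2`, `0 < q ≤ ∞`:
`‖T‖_{L_{p,q}} ≈ ‖(e(n,T)/(n+1)^{1/2})_n‖_{ℓ_{p,q}}`, constants depending only on `p, q`. -/
theorem lorentz_ideal_equiv_hsApprox (p : ℝ) (hp0 : 0 < p) (hp2 : p < 2)
    (q : ℝ≥0∞) (hq : 0 < q) :
    ∃ C : ℝ, 1 ≤ C ∧
      ∀ (H : Type) (_ : NormedAddCommGroup H), ∀ (_ : InnerProductSpace ℂ H)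
        (_ : CompleteSpace H) (ι : Type) (e : HilbertBasis ι ℂ H) (T : H →L[ℂ] H),
        IsCompactOperator (T : H → H) →
        lorentzNorm p q (fun n => ENNReal.ofReal (singVal T n)) ≤
            ENNReal.ofReal C *
              lorentzNorm p q
                (fun n => hsApprox e T n / ENNReal.ofReal (((n : ℝ) + 1) ^ (1 / 2 : ℝ))) ∧
          lorentzNorm p q
              (fun n => hsApprox e T n / ENNReal.ofReal (((n : ℝ) + 1) ^ (1 / 2 : ℝ))) ≤
            ENNReal.ofReal C * lorentzNorm p q (fun n => ENNReal.ofReal (singVal T n)) := by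
  obtain ⟨K1, hK1, h1⟩ := seqA p q hq
  obtain ⟨K2, hK2, h2⟩ := seqB p hp0 hp2 q hq (ENNReal.ofReal (2 * √3)) ENNReal.ofReal_ne_top
  refine ⟨max 1 (max K1.toReal K2.toReal), le_max_left _ _, ?_⟩
  have hC1 : K1 ≤ ENNReal.ofReal (max 1 (max K1.toReal K2.toReal)) := by
    rw [← ENNReal.ofReal_toReal hK1]
    exact ENNReal.ofReal_le_ofReal (by simp)
  have hC2 : K2 ≤ ENNReal.ofReal (max 1 (max K1.toReal K2.toReal)) := by
    rw [← ENNReal.ofReal_toReal hK2]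
    exact ENNReal.ofReal_le_ofReal (by simp)
  intro H _ _ _ ι e T _
  have hμ : Antitone (fun n => ENNReal.ofReal (singVal T n)) := fun m n hmn =>
    ENNReal.ofReal_le_ofReal (singVal_antitone T hmn)
  constructor
  · exact (h1 _ _ hμ (singVal_le_hsApprox e T)).trans (mul_le_mul_left hC1 _)
  · exact (h2 _ _ hμ (hsApprox_antitone e T) (hsApprox_le_tsum e T)).trans
      (mul_le_mul_left hC2 _)
end
end

section
/- Matrix version of rank-one reduction: for 0 < p ≤ 1 and a matrix M ∈ M_n(ℂ), the Schur multiplier norm ‖M‖_{M_p} := sup{‖M∘A‖_p : ‖A‖_p ≤ 1} (where ∘ is entrywise product and ‖·‖_p the Schatten p-quasinorm) equals the supremum of ‖M∘(ξη*)‖_p over unit vectors ξ, η ∈ ℂⁿ. -/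
open scoped ENNReal Matrix

noncomputable section

/-- `j`-th singular value of a complex `n × n` matrix: distance in the `ℓ²`-operator norm
to matrices of rank at most `j`. -/
def muM {n : ℕ} (A : Matrix (Fin n) (Fin n) ℂ) (j : ℕ) : ℝ :=
  sInf {c : ℝ | ∃ B : Matrix (Fin n) (Fin n) ℂ, B.rank ≤ j ∧
    c = ‖Matrix.toEuclideanCLM (𝕜 := ℂ) (A - B)‖}

/-- Schatten `p`-quasinorm of a matrix. -/
def schattenM {n : ℕ} (p : ℝ) (A : Matrix (Fin n) (Fin n) ℂ) : ℝ :=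
  (∑ j ∈ Finset.range n, muM A j ^ p) ^ (1 / p)


def R1 {n : ℕ} (ξ η : EuclideanSpace ℂ (Fin n)) : Matrix (Fin n) (Fin n) ℂ :=
  Matrix.of fun i j => ξ i * (starRingEnd ℂ) (η j)

lemma R1_apply {n : ℕ} (ξ η x : EuclideanSpace ℂ (Fin n)) :
    Matrix.toEuclideanCLM (𝕜 := ℂ) (R1 ξ η) x = (inner ℂ η x) • ξ := by
  ext i
  simp only [Matrix.ofLp_toEuclideanCLM, Matrix.mulVec, dotProduct, R1, Matrix.of_apply,
    PiLp.smul_apply, PiLp.inner_apply, smul_eq_mul, Finset.sum_mul, RCLike.inner_apply]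
  exact Finset.sum_congr rfl fun j _ => by ring

lemma svd {n : ℕ} (A : Matrix (Fin n) (Fin n) ℂ) :
    ∃ (s : Fin n → ℝ) (u v : OrthonormalBasis (Fin n) ℂ (EuclideanSpace ℂ (Fin n))),
      Antitone s ∧ (∀ i, 0 ≤ s i) ∧
      ∀ i, Matrix.toEuclideanCLM (𝕜 := ℂ) A (v i) = ((s i : ℝ) : ℂ) • u i := by
  set T : EuclideanSpace ℂ (Fin n) →ₗ[ℂ] EuclideanSpace ℂ (Fin n) :=
    (Matrix.toEuclideanCLM (𝕜 := ℂ) A : EuclideanSpace ℂ (Fin n) →L[ℂ] EuclideanSpace ℂ (Fin n)).toLinearMap with hT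
  have hn : Module.finrank ℂ (EuclideanSpace ℂ (Fin n)) = n := by simp
  have hpos := T.isPositive_adjoint_comp_self
  have hsym := hpos.isSymmetric
  set v := hsym.eigenvectorBasis hn with hv
  set s : Fin n → ℝ := fun i => T.singularValues i with hs
  have hs2 : ∀ i : Fin n, s i ^ 2 = hsym.eigenvalues hn i := fun i => T.sq_singularValues_fin hn i
  have hs0 : ∀ i, 0 ≤ s i := fun i => T.singularValues_nonneg i
  have hinner : ∀ i j, inner ℂ (T (v i)) (T (v j)) = if i = j then ((s i : ℝ) : ℂ) ^ 2 else 0 := by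
    intro i j
    rw [← LinearMap.adjoint_inner_right]
    have h1 : T.adjoint (T (v j)) = ((hsym.eigenvalues hn j : ℝ) : ℂ) • v j :=
      hsym.apply_eigenvectorBasis hn j
    rw [h1, inner_smul_right, orthonormal_iff_ite.mp v.orthonormal i j]
    split_ifs with h
    · subst h; rw [← hs2]; push_cast; ring
    · simp
  have hort : Orthonormal ℂ (({i | s i ≠ 0} : Set (Fin n)).domRestrict
      (fun i => (((s i)⁻¹ : ℝ) : ℂ) • T (v i))) := by
    rw [orthonormal_iff_ite]
    rintro ⟨i, hi⟩ ⟨j, hj⟩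
    simp only [Set.domRestrict_apply, inner_smul_left, inner_smul_right, hinner, Subtype.mk.injEq]
    have hi' : ((s i : ℝ) : ℂ) ≠ 0 := by exact_mod_cast hi
    split_ifs with h
    · subst h
      simp only [Complex.conj_ofReal]
      push_cast
      field_simp
    · simp
  obtain ⟨u, hu⟩ := hort.exists_orthonormalBasis_extension_of_card_eq (by simp)
  refine ⟨s, u, v, fun i j h => T.singularValues_antitone h, hs0, fun i => ?_⟩
  change T (v i) = _
  by_cases h : s i = 0
  · have := hinner i i
    rw [if_pos rfl, h] at this
    rw [h]
    simpa using this
  · rw [hu i h, smul_smul]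
    have hi' : ((s i : ℝ) : ℂ) ≠ 0 := by exact_mod_cast h
    push_cast
    rw [mul_inv_cancel₀ hi', one_smul]

lemma mat_eq_of_basis {n : ℕ} {A B : Matrix (Fin n) (Fin n) ℂ}
    (v : OrthonormalBasis (Fin n) ℂ (EuclideanSpace ℂ (Fin n)))
    (h : ∀ i, Matrix.toEuclideanCLM (𝕜 := ℂ) A (v i) = Matrix.toEuclideanCLM (𝕜 := ℂ) B (v i)) :
    A = B := by
  apply (Matrix.toEuclideanCLM (𝕜 := ℂ) (n := Fin n)).injective
  apply ContinuousLinearMap.coe_injective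
  exact v.toBasis.ext fun i => by
    rw [v.coe_toBasis]; exact h i

lemma sum_R1_apply {n : ℕ} {ι : Type*} (S : Finset ι) (c : ι → ℝ)
    (u v : ι → EuclideanSpace ℂ (Fin n)) (x : EuclideanSpace ℂ (Fin n)) :
    Matrix.toEuclideanCLM (𝕜 := ℂ) (∑ i ∈ S, ((c i : ℝ) : ℂ) • R1 (u i) (v i)) x
      = ∑ i ∈ S, ((c i : ℝ) : ℂ) • (inner ℂ (v i) x) • u i := by
  rw [map_sum, _root_.sum_apply]
  exact Finset.sum_congr rfl fun i _ => by
    rw [map_smul, _root_.smul_apply, R1_apply]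

lemma svd_sum {n : ℕ} {A : Matrix (Fin n) (Fin n) ℂ} {s : Fin n → ℝ}
    {u v : OrthonormalBasis (Fin n) ℂ (EuclideanSpace ℂ (Fin n))}
    (h : ∀ i, Matrix.toEuclideanCLM (𝕜 := ℂ) A (v i) = ((s i : ℝ) : ℂ) • u i) :
    A = ∑ i, ((s i : ℝ) : ℂ) • R1 (u i) (v i) := by
  refine mat_eq_of_basis v fun j => ?_
  rw [h, sum_R1_apply, Finset.sum_eq_single j]
  · simp
  · intro i _ hij
    simp [orthonormal_iff_ite.mp v.orthonormal i j, hij]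
  · simp

lemma rank_add_le'_s10 {n : ℕ} (A B : Matrix (Fin n) (Fin n) ℂ) : (A + B).rank ≤ A.rank + B.rank :=
  by
  rw [Matrix.rank, Matrix.rank, Matrix.rank, Matrix.mulVecLin_add]
  exact (Submodule.finrank_mono (LinearMap.range_add_le _ _)).trans
    (Submodule.finrank_add_le_finrank_add_finrank _ _)

lemma rank_sum_R1_le {n : ℕ} {ι : Type*} (S : Finset ι) (c : ι → ℝ)
    (u v : ι → EuclideanSpace ℂ (Fin n)) :
    (∑ i ∈ S, ((c i : ℝ) : ℂ) • R1 (u i) (v i)).rank ≤ S.card := by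
  classical
  induction S using Finset.induction_on with
  | empty => simp
  | insert i S hi ih =>
    rw [Finset.sum_insert hi, Finset.card_insert_of_notMem hi, add_comm]
    refine (rank_add_le'_s10 _ _).trans (add_le_add ih ?_)
    have : ((c i : ℝ) : ℂ) • R1 (u i) (v i) =
        Matrix.vecMulVec (fun k => ((c i : ℝ) : ℂ) * u i k) (fun k => (starRingEnd ℂ) (v i k)) := by
      ext a b
      simp [R1, Matrix.vecMulVec_apply, mul_assoc]
    rw [this]
    exact Matrix.rank_vecMulVec_le _ _

lemma muM_bdd {n : ℕ} (A : Matrix (Fin n) (Fin n) ℂ) (j : ℕ) :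
    BddBelow {c : ℝ | ∃ B : Matrix (Fin n) (Fin n) ℂ, B.rank ≤ j ∧
      c = ‖Matrix.toEuclideanCLM (𝕜 := ℂ) (A - B)‖} :=
  ⟨0, by rintro _ ⟨B, -, rfl⟩; exact norm_nonneg _⟩

lemma muM_ne {n : ℕ} (A : Matrix (Fin n) (Fin n) ℂ) (j : ℕ) :
    {c : ℝ | ∃ B : Matrix (Fin n) (Fin n) ℂ, B.rank ≤ j ∧
      c = ‖Matrix.toEuclideanCLM (𝕜 := ℂ) (A - B)‖}.Nonempty :=
  ⟨_, 0, by simp, rfl⟩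

lemma muM_nonneg {n : ℕ} (A : Matrix (Fin n) (Fin n) ℂ) (j : ℕ) : 0 ≤ muM A j :=
  Real.sInf_nonneg (by rintro _ ⟨B, -, rfl⟩; exact norm_nonneg _)

lemma muM_le_norm {n : ℕ} (A : Matrix (Fin n) (Fin n) ℂ) (j : ℕ) :
    muM A j ≤ ‖Matrix.toEuclideanCLM (𝕜 := ℂ) A‖ :=
  csInf_le (muM_bdd A j) ⟨0, by simp, by simp⟩

lemma muM_shift {n : ℕ} (C B : Matrix (Fin n) (Fin n) ℂ) (r j : ℕ) (hB : B.rank ≤ r) :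
    muM C (j + r) ≤ muM (C - B) j := by
  refine le_csInf (muM_ne _ _) ?_
  rintro _ ⟨B', hB', rfl⟩
  refine csInf_le (muM_bdd _ _) ⟨B + B', (rank_add_le'_s10 _ _).trans (by omega), ?_⟩
  rw [sub_sub]

lemma muM_le_svd {n : ℕ} {A : Matrix (Fin n) (Fin n) ℂ} {s : Fin n → ℝ}
    {u v : OrthonormalBasis (Fin n) ℂ (EuclideanSpace ℂ (Fin n))}
    (hs : Antitone s) (hs0 : ∀ i, 0 ≤ s i)
    (h : ∀ i, Matrix.toEuclideanCLM (𝕜 := ℂ) A (v i) = ((s i : ℝ) : ℂ) • u i) (k : Fin n) :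
    muM A k ≤ s k := by
  classical
  set S : Finset (Fin n) := Finset.univ.filter (· < k) with hS
  have hcard : S.card = k := by
    rw [show S = Finset.Iio k by ext; simp [hS], Fin.card_Iio]
  refine (csInf_le (muM_bdd _ _)
    ⟨∑ i ∈ S, ((s i : ℝ) : ℂ) • R1 (u i) (v i), (rank_sum_R1_le _ _ _ _).trans hcard.le, rfl⟩).trans ?_
  have hsub : A - ∑ i ∈ S, ((s i : ℝ) : ℂ) • R1 (u i) (v i)
      = ∑ i, (((if i < k then 0 else s i : ℝ)) : ℂ) • R1 (u i) (v i) := by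
    rw [sub_eq_iff_eq_add, svd_sum h]
    rw [hS, Finset.sum_filter, ← Finset.sum_add_distrib]
    refine Finset.sum_congr rfl fun i _ => ?_
    split_ifs <;> simp
  rw [hsub]
  refine ContinuousLinearMap.opNorm_le_bound _ (hs0 k) fun x => ?_
  rw [sum_R1_apply]
  refine le_of_sq_le_sq ?_ (mul_nonneg (hs0 k) (norm_nonneg x))
  rw [← u.sum_sq_norm_inner_right, mul_pow, ← v.sum_sq_norm_inner_right, Finset.mul_sum]
  refine Finset.sum_le_sum fun i _ => ?_
  have : inner ℂ (u i) (∑ i, (((if i < k then 0 else s i : ℝ)) : ℂ) • inner ℂ (v i) x • u i)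
      = (((if i < k then 0 else s i : ℝ)) : ℂ) * inner ℂ (v i) x := by
    simp only [smul_smul]
    exact u.orthonormal.inner_right_fintype _ i
  rw [this, norm_mul, mul_pow]
  gcongr
  rw [Complex.norm_real, Real.norm_eq_abs]
  split_ifs with hik
  · simpa using hs0 k
  · rw [abs_of_nonneg (hs0 i)]; exact hs (not_lt.mp hik)

lemma svd_le_muM {n : ℕ} {A : Matrix (Fin n) (Fin n) ℂ} {s : Fin n → ℝ}
    {u v : OrthonormalBasis (Fin n) ℂ (EuclideanSpace ℂ (Fin n))}
    (hs : Antitone s) (hs0 : ∀ i, 0 ≤ s i)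
    (h : ∀ i, Matrix.toEuclideanCLM (𝕜 := ℂ) A (v i) = ((s i : ℝ) : ℂ) • u i) (k : Fin n) :
    s k ≤ muM A k := by
  classical
  refine le_csInf (muM_ne _ _) ?_
  rintro _ ⟨B, hB, rfl⟩
  -- coefficients supported on indices up to k
  let L : (Fin (k + 1) → ℂ) →ₗ[ℂ] EuclideanSpace ℂ (Fin n) :=
    Fintype.linearCombination ℂ (fun j : Fin (k + 1) => v ⟨j, by omega⟩)
  let TB : EuclideanSpace ℂ (Fin n) →ₗ[ℂ] EuclideanSpace ℂ (Fin n) := Matrix.toEuclideanLin B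
  have hrank : Module.finrank ℂ (LinearMap.range TB) ≤ k := by
    rw [Matrix.rank_eq_finrank_range_toLin B (EuclideanSpace.basisFun (Fin n) ℂ).toBasis
      (EuclideanSpace.basisFun (Fin n) ℂ).toBasis] at hB
    rw [← Matrix.toEuclideanLin_eq_toLin_orthonormal] at hB
    exact hB
  have hker : ∃ c : Fin (k + 1) → ℂ, c ≠ 0 ∧ TB (L c) = 0 := by
    by_contra hcon
    push Not at hcon
    have hinj : Function.Injective (TB.rangeRestrict ∘ₗ L) := by
      rw [injective_iff_map_eq_zero]
      intro c hc
      by_contra hc0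
      exact hcon c hc0 (by simpa using congrArg Subtype.val hc)
    have := LinearMap.finrank_le_finrank_of_injective hinj
    simp at this
    omega
  obtain ⟨c, hc0, hc⟩ := hker
  set x := L c with hx
  have hxs : x = ∑ j : Fin (k + 1), c j • v ⟨j, by omega⟩ := by
    simp [hx, L, Fintype.linearCombination_apply]
  have hoj : ∀ w : OrthonormalBasis (Fin n) ℂ (EuclideanSpace ℂ (Fin n)),
      Orthonormal ℂ (fun j : Fin (k + 1) => w ⟨j, by omega⟩) := fun w =>
    w.orthonormal.comp (fun j : Fin (k + 1) => (⟨j, by omega⟩ : Fin n))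
      (fun a b hab => by simpa [Fin.ext_iff] using hab)
  have hnorm : ∀ (w : OrthonormalBasis (Fin n) ℂ (EuclideanSpace ℂ (Fin n))) (d : Fin (k + 1) → ℂ),
      ‖∑ j : Fin (k + 1), d j • w ⟨j, by omega⟩‖ ^ 2 = ∑ j, ‖d j‖ ^ 2 := by
    intro w d
    have := (hoj w).inner_sum d d Finset.univ
    rw [inner_self_eq_norm_sq_to_K] at this
    simp only [RCLike.conj_mul] at this
    exact_mod_cast this
  have hxpos : 0 < ‖x‖ := by
    rw [norm_pos_iff]
    intro hx0
    have h1 := hnorm v c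
    rw [← hxs, hx0] at h1
    simp only [norm_zero, ne_eq, OfNat.ofNat_ne_zero, not_false_eq_true, zero_pow] at h1
    apply hc0
    funext j
    have := (Finset.sum_eq_zero_iff_of_nonneg (fun j _ => by positivity)).mp h1.symm j (Finset.mem_univ _)
    simpa using this
  have hAx : Matrix.toEuclideanCLM (𝕜 := ℂ) (A - B) x
      = ∑ j : Fin (k + 1), (((s ⟨j, by omega⟩ : ℝ) : ℂ) * c j) • u ⟨j, by omega⟩ := by
    have hBx : Matrix.toEuclideanCLM (𝕜 := ℂ) B x = 0 := hc
    rw [map_sub, _root_.sub_apply, hBx, sub_zero, hxs, map_sum]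
    refine Finset.sum_congr rfl fun j _ => ?_
    rw [map_smul, h, smul_smul, mul_comm]
  have hle : s k * ‖x‖ ≤ ‖Matrix.toEuclideanCLM (𝕜 := ℂ) (A - B) x‖ := by
    refine le_of_sq_le_sq ?_ (norm_nonneg _)
    rw [hAx, hnorm u, mul_pow, hxs, hnorm v, Finset.mul_sum]
    refine Finset.sum_le_sum fun j _ => ?_
    rw [norm_mul, mul_pow, Complex.norm_real, Real.norm_eq_abs, abs_of_nonneg (hs0 _)]
    have : s k ≤ s ⟨j, by omega⟩ := hs (by rw [Fin.le_def]; simp; omega)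
    have := hs0 k
    gcongr
  have := hle.trans (ContinuousLinearMap.le_opNorm _ x)
  exact le_of_mul_le_mul_right this hxpos

lemma trace_bound {n : ℕ} {ι : Type*} (S : Finset ι) (c : ι → ℝ) (hc : ∀ i, 0 ≤ c i)
    (u v : ι → EuclideanSpace ℂ (Fin n)) (hu : ∀ i, ‖u i‖ ≤ 1) (hv : ∀ i, ‖v i‖ ≤ 1) :
    ∑ j ∈ Finset.range n, muM (∑ i ∈ S, ((c i : ℝ) : ℂ) • R1 (u i) (v i)) j ≤ ∑ i ∈ S, c i := by
  set D := ∑ i ∈ S, ((c i : ℝ) : ℂ) • R1 (u i) (v i) with hD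
  obtain ⟨s, f, e, hs, hs0, h⟩ := svd D
  rw [Finset.sum_range]
  have h1 : ∀ k : Fin n, muM D k ≤ ∑ i ∈ S, c i * (‖inner ℂ (f k) (u i)‖ * ‖inner ℂ (v i) (e k)‖) := by
    intro k
    refine (muM_le_svd hs hs0 h k).trans ?_
    have h2 : ((s k : ℝ) : ℂ) = inner ℂ (f k) (Matrix.toEuclideanCLM (𝕜 := ℂ) D (e k)) := by
      rw [h, inner_smul_right, inner_self_eq_norm_sq_to_K]; simp
    have h3 : s k = ‖((s k : ℝ) : ℂ)‖ := by
      rw [Complex.norm_real, Real.norm_eq_abs, abs_of_nonneg (hs0 k)]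
    rw [h3, h2, hD, sum_R1_apply, inner_sum]
    refine (norm_sum_le _ _).trans (Finset.sum_le_sum fun i _ => ?_)
    rw [inner_smul_right, inner_smul_right, norm_mul, norm_mul, Complex.norm_real,
      Real.norm_eq_abs, abs_of_nonneg (hc i), mul_comm ‖inner ℂ (v i) (e k)‖]
  refine (Finset.sum_le_sum fun k _ => h1 k).trans ?_
  rw [Finset.sum_comm]
  refine Finset.sum_le_sum fun i _ => ?_
  rw [← Finset.mul_sum]
  refine mul_le_of_le_one_right (hc i) ?_
  have h4 := f.sum_sq_norm_inner_right (u i)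
  have h5 := e.sum_sq_norm_inner_left (v i)
  have h6 : ∑ k, ‖inner ℂ (f k) (u i)‖ * ‖inner ℂ (v i) (e k)‖
      ≤ ∑ k, (‖inner ℂ (f k) (u i)‖ ^ 2 + ‖inner ℂ (v i) (e k)‖ ^ 2) / 2 :=
    Finset.sum_le_sum fun k _ => by
      nlinarith [sq_nonneg (‖inner ℂ (f k) (u i)‖ - ‖inner ℂ (v i) (e k)‖)]
  rw [← Finset.sum_div, Finset.sum_add_distrib, h4, h5] at h6
  have := hu i
  have := hv i
  have := norm_nonneg (u i)
  have := norm_nonneg (v i)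
  nlinarith

lemma min_bound {n : ℕ} {ι : Type*} (S : Finset ι) (c : ι → ℝ) (hc : ∀ i, 0 ≤ c i)
    (u v : ι → EuclideanSpace ℂ (Fin n)) (hu : ∀ i, ‖u i‖ ≤ 1) (hv : ∀ i, ‖v i‖ ≤ 1)
    (a : ℝ) (ha : 0 ≤ a) :
    ∑ j ∈ Finset.range n, min (muM (∑ i ∈ S, ((c i : ℝ) : ℂ) • R1 (u i) (v i)) j) a
      ≤ ∑ i ∈ S, min (c i) a := by
  classical
  set C := ∑ i ∈ S, ((c i : ℝ) : ℂ) • R1 (u i) (v i) with hC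
  set P := S.filter (fun i => a < c i) with hP
  set Q := S.filter (fun i => ¬ a < c i) with hQ
  set B := ∑ i ∈ P, ((c i : ℝ) : ℂ) • R1 (u i) (v i) with hB
  have hsplit : C - B = ∑ i ∈ Q, ((c i : ℝ) : ℂ) • R1 (u i) (v i) := by
    rw [sub_eq_iff_eq_add', hC, hB, hP, hQ, Finset.sum_filter_add_sum_filter_not]
  have hr : B.rank ≤ P.card := rank_sum_R1_le _ _ _ _
  have hR : ∑ i ∈ S, min (c i) a = P.card * a + ∑ i ∈ Q, c i := by
    rw [← Finset.sum_filter_add_sum_filter_not S (fun i => a < c i)]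
    congr 1
    · rw [Finset.sum_congr rfl (g := fun _ => a), Finset.sum_const, nsmul_eq_mul]
      intro i hi
      exact min_eq_right (Finset.mem_filter.mp hi).2.le
    · refine Finset.sum_congr rfl fun i hi => min_eq_left (not_lt.mp (Finset.mem_filter.mp hi).2)
  have hmin : ∀ j, 0 ≤ min (muM C j) a := fun j => le_min (muM_nonneg _ _) ha
  have h1 : ∑ j ∈ Finset.range n, min (muM C j) a
      ≤ ∑ j ∈ Finset.range (P.card + n), min (muM C j) a :=
    Finset.sum_le_sum_of_subset_of_nonneg
      (Finset.range_mono (by omega)) (fun j _ _ => hmin j)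
  refine h1.trans ?_
  rw [Finset.sum_range_add, hR]
  refine add_le_add ?_ ?_
  · refine (Finset.sum_le_sum fun j _ => min_le_right _ _).trans ?_
    simp
  · refine le_trans ?_ (trace_bound Q c hc u v hu hv)
    rw [← hsplit]
    refine Finset.sum_le_sum fun j _ => (min_le_left _ _).trans ?_
    rw [add_comm]
    exact muM_shift C B _ j hr

lemma integral_congr_uIoc' {f g : ℝ → ℝ} {a b : ℝ} (h : Set.EqOn f g (Set.uIoc a b)) :
    ∫ x in a..b, f x = ∫ x in a..b, g x :=
  intervalIntegral.integral_congr_ae (Filter.Eventually.of_forall fun _ hx => h hx)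

lemma min_integral (p R t : ℝ) (hp0 : 0 < p) (hp1 : p < 1) (ht : 0 < t) (htR : t ≤ R) :
    IntervalIntegrable (fun a => min t a * a ^ (p - 2)) MeasureTheory.volume 0 R ∧
    ∫ a in (0 : ℝ)..R, min t a * a ^ (p - 2)
      = (1 / p + 1 / (1 - p)) * t ^ p - R ^ (p - 1) / (1 - p) * t := by
  have hR : 0 < R := ht.trans_le htR
  have e1 : Set.EqOn (fun a : ℝ => a ^ (p - 1)) (fun a => min t a * a ^ (p - 2)) (Set.uIoc 0 t) := by
    intro a ha
    rw [Set.uIoc_of_le ht.le] at ha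
    simp only
    rw [min_eq_right ha.2, show p - 1 = 1 + (p - 2) by ring, Real.rpow_add ha.1, Real.rpow_one]
  have e2 : Set.EqOn (fun a : ℝ => t * a ^ (p - 2)) (fun a => min t a * a ^ (p - 2))
      (Set.uIoc t R) := by
    intro a ha
    rw [Set.uIoc_of_le htR] at ha
    simp only
    rw [min_eq_left ha.1.le]
  have h0 : (0 : ℝ) ∉ Set.uIcc t R := by
    rw [Set.uIcc_of_le htR]; intro h; exact absurd h.1 (not_le.mpr ht)
  have i1 : IntervalIntegrable (fun a => min t a * a ^ (p - 2)) MeasureTheory.volume 0 t :=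
    (intervalIntegral.intervalIntegrable_rpow' (by linarith)).congr e1
  have i2 : IntervalIntegrable (fun a => min t a * a ^ (p - 2)) MeasureTheory.volume t R :=
    ((intervalIntegral.intervalIntegrable_rpow (Or.inr h0)).const_mul t).congr e2
  refine ⟨i1.trans i2, ?_⟩
  rw [← intervalIntegral.integral_add_adjacent_intervals i1 i2,
    ← integral_congr_uIoc' e1, ← integral_congr_uIoc' e2,
    intervalIntegral.integral_const_mul, integral_rpow (Or.inl (by linarith)),
    integral_rpow (Or.inr ⟨by linarith, h0⟩)]
  have hp' : 1 - p ≠ 0 := by linarith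
  have hp'' : p - 1 ≠ 0 := by linarith
  rw [show p - 1 + 1 = p by ring, show p - 2 + 1 = p - 1 by ring, Real.zero_rpow hp0.ne']
  have : t ^ p = t * t ^ (p - 1) := by
    conv_lhs => rw [show p = 1 + (p - 1) by ring, Real.rpow_add ht, Real.rpow_one]
  rw [show p - 1 = -(1 - p) by ring] at *
  rw [this]
  field_simp
  ring

lemma min_integral' (p R t : ℝ) (hp0 : 0 < p) (hp1 : p < 1) (ht : 0 ≤ t) (htR : t ≤ R) :
    IntervalIntegrable (fun a => min t a * a ^ (p - 2)) MeasureTheory.volume 0 R ∧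
    ∫ a in (0 : ℝ)..R, min t a * a ^ (p - 2)
      = (1 / p + 1 / (1 - p)) * t ^ p - R ^ (p - 1) / (1 - p) * t := by
  rcases ht.eq_or_lt with rfl | ht
  · have e : Set.EqOn (fun _ : ℝ => (0 : ℝ)) (fun a => min 0 a * a ^ (p - 2)) (Set.uIoc 0 R) := by
      intro a ha
      rw [Set.uIoc_of_le htR] at ha
      simp [min_eq_left ha.1.le]
    refine ⟨(intervalIntegrable_const (c := (0:ℝ))).congr e, ?_⟩
    rw [← integral_congr_uIoc' e]
    simp [Real.zero_rpow hp0.ne']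
  · exact min_integral p R t hp0 hp1 ht htR

lemma rpow_of_min {ι κ : Type*} (S : Finset ι) (U : Finset κ) (c : ι → ℝ) (d : κ → ℝ)
    (hc : ∀ i, 0 ≤ c i) (hd : ∀ i, 0 ≤ d i) (p : ℝ) (hp0 : 0 < p) (hp1 : p ≤ 1)
    (h : ∀ a, 0 ≤ a → ∑ i ∈ S, min (c i) a ≤ ∑ i ∈ U, min (d i) a) :
    ∑ i ∈ S, c i ^ p ≤ ∑ i ∈ U, d i ^ p := by
  set R := ∑ i ∈ S, c i + ∑ i ∈ U, d i with hR
  have hcR : ∀ i ∈ S, c i ≤ R := fun i hi =>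
    (Finset.single_le_sum (fun i _ => hc i) hi).trans
      (le_add_of_nonneg_right (Finset.sum_nonneg fun i _ => hd i))
  have hdR : ∀ i ∈ U, d i ≤ R := fun i hi =>
    (Finset.single_le_sum (fun i _ => hd i) hi).trans
      (le_add_of_nonneg_left (Finset.sum_nonneg fun i _ => hc i))
  have hR0 : 0 ≤ R := add_nonneg (Finset.sum_nonneg fun i _ => hc i) (Finset.sum_nonneg fun i _ => hd i)
  have hlin : ∑ i ∈ S, c i ≤ ∑ i ∈ U, d i := by
    have := h R hR0
    rwa [Finset.sum_congr rfl fun i hi => min_eq_left (hcR i hi),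
      Finset.sum_congr rfl fun i hi => min_eq_left (hdR i hi)] at this
  rcases hp1.eq_or_lt with rfl | hp1
  · simpa using hlin
  have hI : ∫ a in (0 : ℝ)..R, ∑ i ∈ S, min (c i) a * a ^ (p - 2)
      ≤ ∫ a in (0 : ℝ)..R, ∑ i ∈ U, min (d i) a * a ^ (p - 2) := by
    refine intervalIntegral.integral_mono_on hR0
      (by
        have := IntervalIntegrable.sum S fun i hi =>
          (min_integral' p R _ hp0 hp1 (hc i) (hcR i hi)).1
        simpa only [Finset.sum_fn] using this)
      (by
        have := IntervalIntegrable.sum U fun i hi =>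
          (min_integral' p R _ hp0 hp1 (hd i) (hdR i hi)).1
        simpa only [Finset.sum_fn] using this) ?_
    intro a ha
    rw [← Finset.sum_mul, ← Finset.sum_mul]
    exact mul_le_mul_of_nonneg_right (h a ha.1) (Real.rpow_nonneg ha.1 _)
  rw [intervalIntegral.integral_finsetSum
      fun i hi => (min_integral' p R _ hp0 hp1 (hc i) (hcR i hi)).1,
    intervalIntegral.integral_finsetSum
      fun i hi => (min_integral' p R _ hp0 hp1 (hd i) (hdR i hi)).1,
    Finset.sum_congr rfl fun i hi => (min_integral' p R _ hp0 hp1 (hc i) (hcR i hi)).2,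
    Finset.sum_congr rfl fun i hi => (min_integral' p R _ hp0 hp1 (hd i) (hdR i hi)).2,
    Finset.sum_sub_distrib, Finset.sum_sub_distrib, ← Finset.mul_sum, ← Finset.mul_sum,
    ← Finset.mul_sum, ← Finset.mul_sum] at hI
  have hk : 0 < 1 / p + 1 / (1 - p) := by
    have : 0 < 1 - p := by linarith
    positivity
  have hm : 0 ≤ R ^ (p - 1) / (1 - p) := div_nonneg (Real.rpow_nonneg hR0 _) (by linarith)
  have := mul_le_mul_of_nonneg_left hlin hm
  exact le_of_mul_le_mul_left (by linarith) hk

lemma key {n : ℕ} {ι : Type*} (S : Finset ι) (c : ι → ℝ) (hc : ∀ i, 0 ≤ c i)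
    (u v : ι → EuclideanSpace ℂ (Fin n)) (hu : ∀ i, ‖u i‖ ≤ 1) (hv : ∀ i, ‖v i‖ ≤ 1)
    (p : ℝ) (hp0 : 0 < p) (hp1 : p ≤ 1) :
    ∑ j ∈ Finset.range n, muM (∑ i ∈ S, ((c i : ℝ) : ℂ) • R1 (u i) (v i)) j ^ p
      ≤ ∑ i ∈ S, c i ^ p :=
  rpow_of_min _ _ _ _ (fun _ => muM_nonneg _ _) hc p hp0 hp1
    fun a ha => min_bound S c hc u v hu hv a ha

lemma psum_nonneg {n : ℕ} (p : ℝ) (A : Matrix (Fin n) (Fin n) ℂ) :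
    0 ≤ ∑ j ∈ Finset.range n, muM A j ^ p :=
  Finset.sum_nonneg fun _ _ => Real.rpow_nonneg (muM_nonneg _ _) _

lemma schattenM_nonneg {n : ℕ} (p : ℝ) (A : Matrix (Fin n) (Fin n) ℂ) : 0 ≤ schattenM p A :=
  Real.rpow_nonneg (psum_nonneg p A) _

lemma schattenM_le_iff {n : ℕ} {p : ℝ} (hp0 : 0 < p) (A : Matrix (Fin n) (Fin n) ℂ) {t : ℝ}
    (ht : 0 ≤ t) : schattenM p A ≤ t ↔ ∑ j ∈ Finset.range n, muM A j ^ p ≤ t ^ p := by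
  rw [schattenM, one_div, Real.rpow_inv_le_iff_of_pos (psum_nonneg p A) ht hp0]

lemma svd_p {n : ℕ} (A : Matrix (Fin n) (Fin n) ℂ) (p : ℝ) :
    ∃ (s : Fin n → ℝ) (u v : Fin n → EuclideanSpace ℂ (Fin n)),
      (∀ i, 0 ≤ s i) ∧ (∀ i, ‖u i‖ = 1) ∧ (∀ i, ‖v i‖ = 1) ∧
      A = ∑ i, ((s i : ℝ) : ℂ) • R1 (u i) (v i) ∧
      ∑ j ∈ Finset.range n, muM A j ^ p = ∑ i, s i ^ p := by
  obtain ⟨s, u, v, hs, hs0, h⟩ := svd A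
  refine ⟨s, u, v, hs0, fun i => u.orthonormal.1 i, fun i => v.orthonormal.1 i, svd_sum h, ?_⟩
  rw [Finset.sum_range]
  exact Finset.sum_congr rfl fun i _ => by
    rw [le_antisymm (muM_le_svd hs hs0 h i) (svd_le_muM hs hs0 h i)]

open scoped Matrix.Norms.L2Operator in
lemma bdd_R1 {n : ℕ} (p : ℝ) (hp0 : 0 < p) (M : Matrix (Fin n) (Fin n) ℂ) :
    ∃ K : ℝ, ∀ ξ η : EuclideanSpace ℂ (Fin n), ‖ξ‖ = 1 → ‖η‖ = 1 →
      schattenM p (Matrix.hadamard M (R1 ξ η)) ≤ K := by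
  refine ⟨(∑ j ∈ Finset.range n, ‖M‖ ^ p) ^ (1 / p), fun ξ η hξ hη => ?_⟩
  have hM : Matrix.hadamard M (R1 ξ η)
      = Matrix.diagonal (fun i => ξ i) * M * Matrix.diagonal (fun j => (starRingEnd ℂ) (η j)) := by
    ext i j
    simp [R1, Matrix.hadamard_apply, Matrix.mul_diagonal, Matrix.diagonal_mul]
    ring
  have hnorm : ‖Matrix.hadamard M (R1 ξ η)‖ ≤ ‖M‖ := by
    have h1 : ‖(Matrix.diagonal (fun i => ξ i) : Matrix (Fin n) (Fin n) ℂ)‖ ≤ 1 := by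
      rw [Matrix.l2_opNorm_diagonal, pi_norm_le_iff_of_nonneg zero_le_one]
      exact fun i => (PiLp.norm_apply_le ξ i).trans hξ.le
    have h2 : ‖(Matrix.diagonal (fun i => (starRingEnd ℂ) (η i)) :
        Matrix (Fin n) (Fin n) ℂ)‖ ≤ 1 := by
      rw [Matrix.l2_opNorm_diagonal, pi_norm_le_iff_of_nonneg zero_le_one]
      intro i
      rw [RCLike.norm_conj]
      exact (PiLp.norm_apply_le η i).trans hη.le
    rw [hM]
    calc _ ≤ _ := Matrix.l2_opNorm_mul _ _
      _ ≤ (1 * ‖M‖) * 1 := by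
        gcongr
        exact (Matrix.l2_opNorm_mul _ _).trans (by gcongr)
      _ = ‖M‖ := by ring
  rw [schattenM]
  refine Real.rpow_le_rpow (psum_nonneg _ _) ?_ (by positivity)
  refine Finset.sum_le_sum fun j _ => Real.rpow_le_rpow (muM_nonneg _ _) ?_ hp0.le
  exact (muM_le_norm _ _).trans hnorm

lemma R1_schatten {n : ℕ} (p : ℝ) (hp0 : 0 < p) (hp1 : p ≤ 1)
    (ξ η : EuclideanSpace ℂ (Fin n)) (hξ : ‖ξ‖ = 1) (hη : ‖η‖ = 1) :
    schattenM p (R1 ξ η) ≤ 1 := by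
  rw [schattenM_le_iff hp0 _ zero_le_one]
  have := key (n := n) (Finset.univ : Finset Unit) (fun _ => 1) (fun _ => zero_le_one)
    (fun _ => ξ) (fun _ => η) (fun _ => hξ.le) (fun _ => hη.le) p hp0 hp1
  simpa using this

lemma main_bound {n : ℕ} (p : ℝ) (hp0 : 0 < p) (hp1 : p ≤ 1) (M A : Matrix (Fin n) (Fin n) ℂ)
    (K : ℝ) (hK0 : 0 ≤ K)
    (hK : ∀ ξ η : EuclideanSpace ℂ (Fin n), ‖ξ‖ = 1 → ‖η‖ = 1 →
      schattenM p (Matrix.hadamard M (R1 ξ η)) ≤ K) (hA : schattenM p A ≤ 1) :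
    schattenM p (Matrix.hadamard M A) ≤ K := by
  obtain ⟨s, u, v, hs0, hu, hv, hAs, hsum⟩ := svd_p A p
  choose t x y ht0 hx hy hMs hts using
    fun k : Fin n => svd_p (Matrix.hadamard M (R1 (u k) (v k))) p
  have hdec : Matrix.hadamard M A = ∑ q : Fin n × Fin n,
      (((s q.1 * t q.1 q.2 : ℝ)) : ℂ) • R1 (x q.1 q.2) (y q.1 q.2) := by
    rw [Fintype.sum_prod_type]
    have h1 : Matrix.hadamard M A
        = ∑ k, ((s k : ℝ) : ℂ) • Matrix.hadamard M (R1 (u k) (v k)) := by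
      conv_lhs => rw [hAs]
      ext i j
      simp only [Matrix.hadamard_apply, Matrix.sum_apply, Matrix.smul_apply, Finset.mul_sum,
        smul_eq_mul]
      exact Finset.sum_congr rfl fun k _ => by ring
    rw [h1]
    refine Finset.sum_congr rfl fun k _ => ?_
    conv_lhs => rw [hMs k]
    rw [Finset.smul_sum]
    refine Finset.sum_congr rfl fun l _ => ?_
    rw [smul_smul]; push_cast; rfl
  rw [schattenM_le_iff hp0 _ hK0, hdec]
  refine (key Finset.univ (fun q : Fin n × Fin n => s q.1 * t q.1 q.2)
    (fun q => mul_nonneg (hs0 _) (ht0 _ _)) _ _ (fun q => (hx _ _).le) (fun q => (hy _ _).le)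
    p hp0 hp1).trans ?_
  rw [schattenM_le_iff hp0 _ zero_le_one, Real.one_rpow, hsum] at hA
  rw [Fintype.sum_prod_type]
  calc ∑ k, ∑ l, (s k * t k l) ^ p = ∑ k, s k ^ p * ∑ l, t k l ^ p := by
        refine Finset.sum_congr rfl fun k _ => ?_
        rw [Finset.mul_sum]
        exact Finset.sum_congr rfl fun l _ => Real.mul_rpow (hs0 _) (ht0 _ _)
    _ ≤ ∑ k, s k ^ p * K ^ p := by
        refine Finset.sum_le_sum fun k _ =>
          mul_le_mul_of_nonneg_left ?_ (Real.rpow_nonneg (hs0 k) _)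
        rw [← hts k, ← schattenM_le_iff hp0 _ hK0]
        exact hK _ _ (hu k) (hv k)
    _ ≤ K ^ p := by
        rw [← Finset.sum_mul]
        exact mul_le_of_le_one_left (Real.rpow_nonneg hK0 _) hA

/-- Matrix rank-one reduction: for `0 < p ≤ 1`, the Schur multiplier norm
`‖M‖_{M_p} = sup{‖M∘A‖_p : ‖A‖_p ≤ 1}` equals the supremum of `‖M∘(ξη*)‖_p`
over unit vectors `ξ, η ∈ ℂⁿ`. -/
theorem matrix_schur_rank_one (n : ℕ) (p : ℝ) (hp0 : 0 < p) (hp1 : p ≤ 1)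
    (M : Matrix (Fin n) (Fin n) ℂ) :
    sSup {x : ℝ | ∃ A : Matrix (Fin n) (Fin n) ℂ, schattenM p A ≤ 1 ∧
        x = schattenM p (Matrix.hadamard M A)} =
      sSup {x : ℝ | ∃ ξ η : EuclideanSpace ℂ (Fin n), ‖ξ‖ = 1 ∧ ‖η‖ = 1 ∧
        x = schattenM p (Matrix.hadamard M
          (Matrix.of fun i j => ξ i * (starRingEnd ℂ) (η j)))} := by
  obtain ⟨K, hK⟩ := bdd_R1 p hp0 M
  have hbdd : BddAbove {x : ℝ | ∃ ξ η : EuclideanSpace ℂ (Fin n), ‖ξ‖ = 1 ∧ ‖η‖ = 1 ∧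
        x = schattenM p (Matrix.hadamard M
          (Matrix.of fun i j => ξ i * (starRingEnd ℂ) (η j)))} := by
    refine ⟨K, ?_⟩
    rintro _ ⟨ξ, η, hξ, hη, rfl⟩
    exact hK ξ η hξ hη
  have hbdd' : BddAbove {x : ℝ | ∃ A : Matrix (Fin n) (Fin n) ℂ, schattenM p A ≤ 1 ∧
        x = schattenM p (Matrix.hadamard M A)} := by
    refine ⟨max K 0, ?_⟩
    rintro _ ⟨A, hA, rfl⟩
    exact main_bound p hp0 hp1 M A _ (le_max_right _ _)
      (fun ξ η hξ hη => (hK ξ η hξ hη).trans (le_max_left _ _)) hA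
  apply le_antisymm
  · have h0 : 0 ≤ sSup {x : ℝ | ∃ ξ η : EuclideanSpace ℂ (Fin n), ‖ξ‖ = 1 ∧ ‖η‖ = 1 ∧
        x = schattenM p (Matrix.hadamard M
          (Matrix.of fun i j => ξ i * (starRingEnd ℂ) (η j)))} := by
      refine Real.sSup_nonneg ?_
      rintro _ ⟨ξ, η, -, -, rfl⟩
      exact schattenM_nonneg _ _
    refine Real.sSup_le ?_ h0
    rintro _ ⟨A, hA, rfl⟩
    exact main_bound p hp0 hp1 M A _ h0
      (fun ξ η hξ hη => le_csSup hbdd ⟨ξ, η, hξ, hη, rfl⟩) hA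
  · refine Real.sSup_le ?_ ?_
    · rintro _ ⟨ξ, η, hξ, hη, rfl⟩
      exact le_csSup hbdd' ⟨_, R1_schatten p hp0 hp1 ξ η hξ hη, rfl⟩
    · refine Real.sSup_nonneg ?_
      rintro _ ⟨A, -, rfl⟩
      exact schattenM_nonneg _ _
end
end
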